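/- The number α₃ = √7 · ln((√7 − 1)/(√7 + 1)) has irrationality measure at most 6.64611; that is, for every real κ > 6.64611, there exist only finitely many pairs (p, q) with p ∈ ℤ and q a positive integer such that |α₃ − p/q| < q^(−κ). -/

import Mathlib

/-!
Put `t = y (1 - y)` and integrate `((729 t² - 350 t + 42)⁸ (1 - 4 t)⁷ / t¹⁴)ⁿ / t` in `y` between
the two zeros `(13 ± √7) / 27` of the quadratic factor. The integrand is symmetric under
`y ↦ 1 - y`, so its partial fraction expansion at the poles `0` and `1` has a single sequence of
integer coefficients, and only the coefficient of `1 / t` contributes a logarithm: `√7` times the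
integral is a linear form in `1` and `α = √7 log ((√7 - 1) / (√7 + 1))`. As the integrand is
positive, maximising it shows that the form is exponentially small but not zero.

The rational coefficient of the form has a denominator dividing `3⁶ⁿ lcm(1, …, 18n)`. Every prime
`p` in `(7n, 8n]` can be removed from this lcm: modulo `p` the numerator is a `p`-th power times a
polynomial antisymmetric under `y ↦ 1 - y`, which makes the Cartier operator vanish on the
integrand, so that the coefficients which would be divided by `p` are themselves divisible by `p`.
The prime number theorem, obtained here from the Wiener–Ikehara argument with the Fejér kernel,
gives the size of what remains.

The exponents of all these estimates give integers `Aₙ`, `Bₙ` with `Aₙ - Bₙ α` positive and small.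
Comparing a fraction `p / q` with the form whose index `n` makes `q (Aₙ - Bₙ α)` just smaller than
`1 / 2` bounds `|α - p / q|` from below by a power of `q`.
-/

section FejerKernel

open MeasureTheory Filter Topology

/-- The unnormalised Fejér kernel of the real line. Its value at `0` is the junk value `0`, which is
harmless because the kernel only occurs under integral signs. -/
noncomputable def fejerKernel (v : ℝ) : ℝ := 2 * (1 - Real.cos v) / v ^ 2

/-- The dilates of the Fejér kernel: they all have the same mass, which concentrates at `0` as `T`
tends to infinity. -/
noncomputable def dilatedFejerKernel (T v : ℝ) : ℝ := T * fejerKernel (T * v)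

/-- The triangular weight on `[-T, T]`, of which `dilatedFejerKernel T` is the Fourier transform. It
is not truncated: integrals against it are restricted to `[-T, T]`. -/
noncomputable def triangleWeight (T τ : ℝ) : ℝ := 1 - |τ| / T

lemma fejerKernel_nonneg (v : ℝ) : 0 ≤ fejerKernel v :=
  div_nonneg (mul_nonneg zero_le_two (sub_nonneg.mpr (Real.cos_le_one v))) (sq_nonneg v)

lemma measurable_fejerKernel : Measurable fejerKernel := by
  unfold fejerKernel
  fun_prop

lemma fejerKernel_le (v : ℝ) : fejerKernel v ≤ 5 * (1 + v ^ 2)⁻¹ := by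
  rcases eq_or_ne v 0 with rfl | hv
  · norm_num [fejerKernel]
  · have hv2 : 0 < v ^ 2 := by positivity
    rw [fejerKernel, ← div_eq_mul_inv, div_le_div_iff₀ hv2 (by positivity)]
    nlinarith [Real.one_sub_sq_div_two_le_cos (x := v), Real.neg_one_le_cos v]

lemma integrable_fejerKernel : Integrable fejerKernel := by
  refine (integrable_inv_one_add_sq.const_mul 5).mono' measurable_fejerKernel.aestronglyMeasurable
    (ae_of_all _ fun v ↦ ?_)
  rw [Real.norm_of_nonneg (fejerKernel_nonneg v)]
  exact fejerKernel_le v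

lemma integral_fejerKernel_pos : 0 < ∫ v, fejerKernel v := by
  have hpos : 0 < ∫ v in (0 : ℝ)..1, fejerKernel v := by
    refine intervalIntegral.intervalIntegral_pos_of_pos_on
      integrable_fejerKernel.intervalIntegrable (fun v hv ↦ ?_) one_pos
    have hcos : Real.cos v < 1 := by
      rw [← Real.cos_zero]
      exact Real.cos_lt_cos_of_nonneg_of_le_pi le_rfl (by linarith [hv.2, Real.pi_gt_three]) hv.1
    exact div_pos (by linarith) (pow_pos hv.1 2)
  rw [intervalIntegral.integral_of_le zero_le_one] at hpos
  exact hpos.trans_le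
    (setIntegral_le_integral integrable_fejerKernel (ae_of_all _ fejerKernel_nonneg))

lemma tendsto_intervalIntegral_fejerKernel :
    Tendsto (fun R : ℝ ↦ ∫ v in (-R)..R, fejerKernel v) atTop (𝓝 (∫ v, fejerKernel v)) :=
  intervalIntegral_tendsto_integral integrable_fejerKernel tendsto_neg_atTop_atBot tendsto_id

lemma integral_linear_mul_cexp {z : ℂ} (hz : z ≠ 0) (c : ℂ) (a b : ℝ) :
    ∫ τ in a..b, (1 + c * (τ : ℂ)) * Complex.exp (z * τ) =
      ((1 + c * b) / z - c / z ^ 2) * Complex.exp (z * b) -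
        ((1 + c * a) / z - c / z ^ 2) * Complex.exp (z * a) := by
  refine intervalIntegral.integral_eq_sub_of_hasDerivAt
    (f := fun τ : ℝ ↦ ((1 + c * τ) / z - c / z ^ 2) * Complex.exp (z * τ)) (fun τ _ ↦ ?_)
    (Continuous.intervalIntegrable (by fun_prop) _ _)
  have hlin : HasDerivAt (fun w : ℂ ↦ (1 + c * w) / z - c / z ^ 2) (c / z) τ := by
    simpa using
      ((((hasDerivAt_id (τ : ℂ)).const_mul c).const_add 1).div_const z).sub_const (c / z ^ 2)
  have hexp : HasDerivAt (fun w : ℂ ↦ Complex.exp (z * w)) (Complex.exp (z * τ) * z) τ := by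
    simpa using ((hasDerivAt_id (τ : ℂ)).const_mul z).cexp
  refine (hlin.mul hexp).comp_ofReal.congr_deriv ?_
  field_simp
  ring

section Dilates

variable {T : ℝ}

lemma continuous_triangleWeight (T : ℝ) : Continuous (triangleWeight T) := by
  unfold triangleWeight
  fun_prop

lemma integral_triangleWeight_mul_cexp (hT : 0 < T) {v : ℝ} (hv : v ≠ 0) :
    ∫ τ in (-T)..T, (triangleWeight T τ : ℂ) * Complex.exp (Complex.I * τ * v) =
      dilatedFejerKernel T v := by
  have hT' : (T : ℂ) ≠ 0 := mod_cast hT.ne'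
  have hv' : (v : ℂ) ≠ 0 := mod_cast hv
  have hz : Complex.I * v ≠ 0 := mul_ne_zero Complex.I_ne_zero hv'
  have hcont : Continuous fun τ : ℝ ↦
      (triangleWeight T τ : ℂ) * Complex.exp (Complex.I * τ * v) := by
    have := continuous_triangleWeight T
    fun_prop
  have hleft : ∫ τ in (-T)..0, (triangleWeight T τ : ℂ) * Complex.exp (Complex.I * τ * v) =
      ∫ τ in (-T)..0, (1 + (T : ℂ)⁻¹ * τ) * Complex.exp (Complex.I * v * τ) := by
    refine intervalIntegral.integral_congr fun τ hτ ↦ ?_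
    rw [Set.uIcc_of_le (by linarith)] at hτ
    simp only [triangleWeight, abs_of_nonpos hτ.2]
    push_cast
    ring_nf
  have hright : ∫ τ in 0..T, (triangleWeight T τ : ℂ) * Complex.exp (Complex.I * τ * v) =
      ∫ τ in 0..T, (1 + -(T : ℂ)⁻¹ * τ) * Complex.exp (Complex.I * v * τ) := by
    refine intervalIntegral.integral_congr fun τ hτ ↦ ?_
    rw [Set.uIcc_of_le hT.le] at hτ
    simp only [triangleWeight, abs_of_nonneg hτ.1]
    push_cast
    ring_nf
  rw [← intervalIntegral.integral_add_adjacent_intervals (b := 0)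
    (hcont.intervalIntegrable _ _) (hcont.intervalIntegrable _ _), hleft, hright,
    integral_linear_mul_cexp hz, integral_linear_mul_cexp hz, dilatedFejerKernel, fejerKernel]
  push_cast
  rw [Complex.cos, show Complex.I * v * T = T * v * Complex.I by ring,
    show Complex.I * v * -T = -(T * v) * Complex.I by ring, mul_pow, Complex.I_sq]
  simp only [mul_zero, Complex.exp_zero]
  field_simp
  ring

lemma dilatedFejerKernel_nonneg (hT : 0 ≤ T) (v : ℝ) : 0 ≤ dilatedFejerKernel T v :=
  mul_nonneg hT (fejerKernel_nonneg _)

lemma integrable_dilatedFejerKernel_sub (hT : T ≠ 0) (x : ℝ) :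
    Integrable fun u ↦ dilatedFejerKernel T (x - u) :=
  ((integrable_fejerKernel.comp_mul_left' hT).comp_sub_left x).const_mul T

lemma integral_dilatedFejerKernel_sub (hT : 0 < T) (x : ℝ) :
    ∫ u, dilatedFejerKernel T (x - u) = ∫ v, fejerKernel v := by
  simp only [dilatedFejerKernel]
  rw [integral_sub_left_eq_self (fun w ↦ T * fejerKernel (T * w)) volume x, integral_const_mul,
    Measure.integral_comp_mul_left fejerKernel T, abs_of_pos (by positivity), smul_eq_mul,
    mul_inv_cancel_left₀ hT.ne']

lemma setIntegral_Icc_dilatedFejerKernel_sub (T x : ℝ) {δ : ℝ} (hδ : 0 ≤ δ) :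
    ∫ u in Set.Icc (x - δ) (x + δ), dilatedFejerKernel T (x - u) =
      ∫ v in (-(T * δ))..(T * δ), fejerKernel v := by
  simp only [dilatedFejerKernel, mul_sub]
  rw [integral_Icc_eq_integral_Ioc, ← intervalIntegral.integral_of_le (by linarith),
    intervalIntegral.integral_const_mul, intervalIntegral.mul_integral_comp_sub_mul]
  congr 1 <;> ring

lemma tendsto_setIntegral_Ioi_dilatedFejerKernel_sub (hT : 0 < T) :
    Tendsto (fun x ↦ ∫ u in Set.Ioi (0 : ℝ), dilatedFejerKernel T (x - u)) atTop
      (𝓝 (∫ v, fejerKernel v)) := by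
  have hnonneg (x : ℝ) := ae_of_all volume fun u ↦ dilatedFejerKernel_nonneg hT.le (x - u)
  have hlower : Tendsto (fun x ↦ ∫ v in (-(T * (x / 2)))..(T * (x / 2)), fejerKernel v) atTop
      (𝓝 (∫ v, fejerKernel v)) :=
    tendsto_intervalIntegral_fejerKernel.comp
      ((tendsto_id.atTop_div_const two_pos).const_mul_atTop hT)
  refine tendsto_of_tendsto_of_tendsto_of_le_of_le' hlower tendsto_const_nhds ?_ ?_
  · filter_upwards [eventually_gt_atTop 0] with x hx
    rw [← setIntegral_Icc_dilatedFejerKernel_sub T x (by linarith)]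
    exact setIntegral_mono_set (integrable_dilatedFejerKernel_sub hT.ne' x).integrableOn
      (ae_restrict_of_ae (hnonneg x))
      (LE.le.eventuallyLE fun u hu ↦ Set.mem_Ioi.mpr (by linarith [hu.1]))
  · filter_upwards with x
    rw [← integral_dilatedFejerKernel_sub hT x]
    exact setIntegral_le_integral (integrable_dilatedFejerKernel_sub hT.ne' x) (hnonneg x)

lemma setIntegral_mul_dilatedFejerKernel_sub {s : Set ℝ} {f : ℝ → ℂ} (hf : IntegrableOn f s)
    (hT : 0 < T) (x : ℝ) :
    ∫ u in s, f u * dilatedFejerKernel T (x - u) =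
      ∫ τ in (-T)..T, triangleWeight T τ * Complex.exp (Complex.I * τ * x) *
        ∫ u in s, f u * Complex.exp (-(Complex.I * τ) * u) := by
  have hexp (τ u : ℝ) : Complex.exp (Complex.I * τ * ((x - u : ℝ) : ℂ)) =
      Complex.exp (Complex.I * τ * x) * Complex.exp (-(Complex.I * τ) * u) := by
    rw [← Complex.exp_add]
    push_cast
    ring_nf
  have hint : Integrable (Function.uncurry fun τ u : ℝ ↦
      f u * (triangleWeight T τ * Complex.exp (Complex.I * τ * ((x - u : ℝ) : ℂ))))
      ((volume.restrict (Set.uIoc (-T) T)).prod (volume.restrict s)) := by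
    have hweight : IntegrableOn (fun τ ↦ (triangleWeight T τ : ℂ)) (Set.uIoc (-T) T) :=
      (((Complex.continuous_ofReal.comp (continuous_triangleWeight T)).integrableOn_uIcc).mono_set
        Set.uIoc_subset_uIcc)
    refine ((hweight.mul_prod hf).bdd_mul (c := 1)
      (f := fun z : ℝ × ℝ ↦ Complex.exp (Complex.I * z.1 * ((x - z.2 : ℝ) : ℂ)))
      (Continuous.aestronglyMeasurable (by fun_prop)) (ae_of_all _ fun z ↦ ?_)).congr
      (ae_of_all _ fun z ↦ ?_)
    · rw [show Complex.I * z.1 * ((x - z.2 : ℝ) : ℂ) = ((z.1 * (x - z.2) : ℝ) : ℂ) * Complex.I by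
        push_cast; ring, Complex.norm_exp_ofReal_mul_I]
    · simp only [Function.uncurry]
      ring
  calc ∫ u in s, f u * dilatedFejerKernel T (x - u)
      = ∫ u in s, ∫ τ in (-T)..T,
          f u * (triangleWeight T τ * Complex.exp (Complex.I * τ * ((x - u : ℝ) : ℂ))) := by
        have hne : ∀ᵐ u ∂volume.restrict s, u ≠ x := ae_restrict_of_ae (Measure.ae_ne volume x)
        refine integral_congr_ae (hne.mono fun u hu ↦ ?_)
        simp only [intervalIntegral.integral_const_mul,
          integral_triangleWeight_mul_cexp hT (sub_ne_zero.mpr hu.symm)]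
    _ = _ := by
        rw [← intervalIntegral_integral_swap hint]
        congr 1 with τ
        rw [← integral_const_mul]
        congr 1 with u
        rw [hexp]
        ring

end Dilates

end FejerKernel

section WienerIkehara

open MeasureTheory Filter Topology

lemma tendsto_setIntegral_Ioi_mul_cexp_neg {f : ℝ → ℂ} (hf : IntegrableOn f (Set.Ioi 0)) :
    Tendsto (fun ε : ℝ ↦ ∫ u in Set.Ioi (0 : ℝ), f u * Complex.exp (-ε * u)) (𝓝[>] 0)
      (𝓝 (∫ u in Set.Ioi (0 : ℝ), f u)) := by
  refine tendsto_integral_filter_of_dominated_convergence (fun u ↦ ‖f u‖) ?_ ?_ hf.norm ?_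
  · filter_upwards with ε
    exact hf.aestronglyMeasurable.mul (Continuous.aestronglyMeasurable (by fun_prop))
  · filter_upwards [self_mem_nhdsWithin] with ε hε
    filter_upwards [ae_restrict_mem measurableSet_Ioi] with u hu
    have hexp : ‖Complex.exp (-ε * u)‖ ≤ 1 := by
      rw [Complex.norm_exp]
      simpa using mul_nonneg (Set.mem_Ioi.mp hε).le (Set.mem_Ioi.mp hu).le
    simpa using mul_le_mul_of_nonneg_left hexp (norm_nonneg (f u))
  · filter_upwards with u
    have hcont : Continuous fun ε : ℝ ↦ f u * Complex.exp (-ε * u) := by fun_prop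
    simpa using (hcont.tendsto 0).mono_left nhdsWithin_le_nhds

lemma tendsto_intervalIntegral_mul_boundary {H : ℂ → ℂ} (hH : ContinuousOn H {s | 0 ≤ s.re})
    {φ : ℝ → ℂ} (hφ : Continuous φ) (a b : ℝ) :
    Tendsto (fun ε : ℝ ↦ ∫ τ in a..b, φ τ * H (ε + Complex.I * τ)) (𝓝[>] 0)
      (𝓝 (∫ τ in a..b, φ τ * H (Complex.I * τ))) := by
  have hcont : Continuous (Function.uncurry fun ε τ : ℝ ↦
      φ τ * H ((max ε 0 : ℝ) + Complex.I * τ)) := by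
    refine (hφ.comp continuous_snd).mul (hH.comp_continuous (by fun_prop) fun z ↦ ?_)
    simp
  have hlim := (intervalIntegral.continuous_parametric_intervalIntegral_of_continuous'
    (μ := volume) hcont a b).tendsto 0
  simp only [max_self, Complex.ofReal_zero, zero_add] at hlim
  refine (hlim.mono_left nhdsWithin_le_nhds).congr' ?_
  filter_upwards [self_mem_nhdsWithin] with ε hε
  rw [max_eq_left (Set.mem_Ioi.mp hε).le]

lemma tendsto_integral_mul_cexp_I_atTop (f : ℝ → ℂ) :
    Tendsto (fun x : ℝ ↦ ∫ τ, f τ * Complex.exp (Complex.I * τ * x)) atTop (𝓝 0) := by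
  have hx : Tendsto (fun x : ℝ ↦ -x / (2 * Real.pi)) atTop (cocompact ℝ) :=
    (tendsto_neg_atTop_atBot.atBot_div_const Real.two_pi_pos).mono_right atBot_le_cocompact
  refine ((Real.tendsto_integral_exp_smul_cocompact f).comp hx).congr fun x ↦ ?_
  simp only [Function.comp]
  congr 1 with τ
  rw [Circle.smul_def, smul_eq_mul, mul_comm, Real.fourierChar_apply,
    show 2 * Real.pi * -(τ * (-x / (2 * Real.pi))) = τ * x by field_simp]
  push_cast
  ring_nf

section BoundedFunction

variable {h : ℝ → ℂ} {C : ℝ} {H : ℂ → ℂ} {T : ℝ}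

lemma setIntegral_mul_dilatedFejerKernel_sub_eq_boundary (hmeas : Measurable h)
    (hbound : ∀ u, ‖h u‖ ≤ C) (hH : ContinuousOn H {s | 0 ≤ s.re})
    (hlaplace : ∀ w : ℂ, 0 < w.re →
      ∫ u in Set.Ioi (0 : ℝ), h u * Complex.exp (-w * u) = H w)
    (hT : 0 < T) (x : ℝ) :
    ∫ u in Set.Ioi (0 : ℝ), h u * dilatedFejerKernel T (x - u) =
      ∫ τ in (-T)..T, triangleWeight T τ * Complex.exp (Complex.I * τ * x) * H (Complex.I * τ) := by
  have hint : IntegrableOn (fun u ↦ h u * dilatedFejerKernel T (x - u)) (Set.Ioi 0) :=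
    ((integrable_dilatedFejerKernel_sub hT.ne' x).ofReal.bdd_mul hmeas.aestronglyMeasurable
      (ae_of_all _ hbound)).integrableOn
  have hweight : Continuous fun τ : ℝ ↦
      (triangleWeight T τ : ℂ) * Complex.exp (Complex.I * τ * x) := by
    have := continuous_triangleWeight T
    fun_prop
  refine tendsto_nhds_unique (tendsto_setIntegral_Ioi_mul_cexp_neg hint)
    ((tendsto_intervalIntegral_mul_boundary hH hweight (-T) T).congr' ?_)
  filter_upwards [self_mem_nhdsWithin] with ε hε
  have hε' : 0 < ε := hε
  have hdamped : IntegrableOn (fun u : ℝ ↦ h u * Complex.exp (-ε * u)) (Set.Ioi 0) :=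
    (integrableOn_exp_mul_complex_Ioi (by simpa using hε') 0).bdd_mul hmeas.aestronglyMeasurable
      (ae_of_all _ hbound)
  have hcomm : (∫ u in Set.Ioi (0 : ℝ),
      h u * dilatedFejerKernel T (x - u) * Complex.exp (-ε * u)) =
      ∫ u in Set.Ioi (0 : ℝ), h u * Complex.exp (-ε * u) * dilatedFejerKernel T (x - u) := by
    simp only [mul_right_comm]
  rw [hcomm, setIntegral_mul_dilatedFejerKernel_sub hdamped hT]
  congr 1 with τ
  rw [← hlaplace _ (by simpa using hε')]
  simp only [mul_assoc, ← Complex.exp_add]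
  ring_nf

lemma tendsto_setIntegral_mul_dilatedFejerKernel_sub_zero (hmeas : Measurable h)
    (hbound : ∀ u, ‖h u‖ ≤ C) (hH : ContinuousOn H {s | 0 ≤ s.re})
    (hlaplace : ∀ w : ℂ, 0 < w.re →
      ∫ u in Set.Ioi (0 : ℝ), h u * Complex.exp (-w * u) = H w)
    (hT : 0 < T) :
    Tendsto (fun x : ℝ ↦ ∫ u in Set.Ioi (0 : ℝ), h u * dilatedFejerKernel T (x - u)) atTop
      (𝓝 0) := by
  refine (tendsto_integral_mul_cexp_I_atTop ((Set.Ioc (-T) T).indicator fun τ ↦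
    (triangleWeight T τ : ℂ) * H (Complex.I * τ))).congr fun x ↦ ?_
  rw [setIntegral_mul_dilatedFejerKernel_sub_eq_boundary hmeas hbound hH hlaplace hT,
    intervalIntegral.integral_of_le (by linarith), ← integral_indicator measurableSet_Ioc]
  congr 1 with τ
  by_cases hτ : τ ∈ Set.Ioc (-T) T
  · simp only [Set.indicator_of_mem hτ, mul_right_comm]
  · simp only [Set.indicator_of_notMem hτ, zero_mul]

end BoundedFunction

section Tauberian

variable {g : ℝ → ℝ} {C : ℝ} {T δ : ℝ}

lemma integrable_mul_dilatedFejerKernel_sub (hmeas : Measurable g) (hnonneg : ∀ u, 0 ≤ g u)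
    (hle : ∀ u, g u ≤ C) (hT : T ≠ 0) (x : ℝ) :
    Integrable fun u ↦ g u * dilatedFejerKernel T (x - u) :=
  (integrable_dilatedFejerKernel_sub hT x).bdd_mul hmeas.aestronglyMeasurable
    (ae_of_all _ fun u ↦ by rw [Real.norm_of_nonneg (hnonneg u)]; exact hle u)

lemma le_mul_exp_sub_of_monotone_mul_exp (hmono : Monotone fun u ↦ g u * Real.exp u) {u v : ℝ}
    (huv : u ≤ v) : g u ≤ g v * Real.exp (v - u) := by
  rw [Real.exp_sub, ← mul_div_assoc, le_div_iff₀ (Real.exp_pos u)]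
  exact hmono huv

lemma mul_integral_fejerKernel_le_setIntegral (hmeas : Measurable g) (hnonneg : ∀ u, 0 ≤ g u)
    (hle : ∀ u, g u ≤ C) (hmono : Monotone fun u ↦ g u * Real.exp u) (hT : 0 < T) (hδ : 0 ≤ δ)
    {y : ℝ} (hy : 0 < y) :
    g y * Real.exp (-(2 * δ)) * (∫ v in (-(T * δ))..(T * δ), fejerKernel v) ≤
      ∫ u in Set.Ioi (0 : ℝ), g u * dilatedFejerKernel T (y + δ - u) := by
  have hint := integrable_mul_dilatedFejerKernel_sub hmeas hnonneg hle hT.ne' (y + δ)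
  rw [← setIntegral_Icc_dilatedFejerKernel_sub T (y + δ) hδ, ← integral_const_mul]
  calc _ ≤ ∫ u in Set.Icc (y + δ - δ) (y + δ + δ), g u * dilatedFejerKernel T (y + δ - u) := by
        refine setIntegral_mono_on
          ((integrable_dilatedFejerKernel_sub hT.ne' _).const_mul _).integrableOn
          hint.integrableOn measurableSet_Icc fun u hu ↦ ?_
        refine mul_le_mul_of_nonneg_right ?_ (dilatedFejerKernel_nonneg hT.le _)
        rw [Real.exp_neg, ← div_eq_mul_inv, div_le_iff₀ (Real.exp_pos _)]
        refine (le_mul_exp_sub_of_monotone_mul_exp hmono (show y ≤ u by linarith [hu.1])).trans ?_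
        exact mul_le_mul_of_nonneg_left (Real.exp_le_exp.mpr (by linarith [hu.2])) (hnonneg u)
    _ ≤ _ := setIntegral_mono_set hint.integrableOn
        (ae_of_all _ fun u ↦ mul_nonneg (hnonneg u) (dilatedFejerKernel_nonneg hT.le _))
        (LE.le.eventuallyLE fun u hu ↦ Set.mem_Ioi.mpr (by linarith [hu.1]))

lemma setIntegral_le_mul_integral_fejerKernel_add (hmeas : Measurable g) (hnonneg : ∀ u, 0 ≤ g u)
    (hle : ∀ u, g u ≤ C) (hmono : Monotone fun u ↦ g u * Real.exp u) (hT : 0 < T) (hδ : 0 ≤ δ)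
    (y : ℝ) :
    ∫ u in Set.Ioi (0 : ℝ), g u * dilatedFejerKernel T (y - δ - u) ≤
      g y * Real.exp (2 * δ) * (∫ v, fejerKernel v) +
        C * ((∫ v, fejerKernel v) - ∫ v in (-(T * δ))..(T * δ), fejerKernel v) := by
  set s : Set ℝ := Set.Icc (y - δ - δ) (y - δ + δ)
  have hker (u : ℝ) := dilatedFejerKernel_nonneg hT.le (y - δ - u)
  have hint := integrable_mul_dilatedFejerKernel_sub hmeas hnonneg hle hT.ne' (y - δ)
  have hkint := integrable_dilatedFejerKernel_sub hT.ne' (y - δ)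
  have htail : (∫ v, fejerKernel v) - ∫ v in (-(T * δ))..(T * δ), fejerKernel v =
      ∫ u in sᶜ, dilatedFejerKernel T (y - δ - u) := by
    rw [← setIntegral_Icc_dilatedFejerKernel_sub T (y - δ) hδ,
      ← integral_dilatedFejerKernel_sub hT (y - δ),
      ← integral_add_compl (measurableSet_Icc : MeasurableSet s) hkint, add_sub_cancel_left]
  have hnear : ∫ u in s, g u * dilatedFejerKernel T (y - δ - u) ≤
      g y * Real.exp (2 * δ) * ∫ v, fejerKernel v := by
    have hconst : 0 ≤ g y * Real.exp (2 * δ) := mul_nonneg (hnonneg y) (Real.exp_pos _).le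
    calc _ ≤ ∫ u in s, g y * Real.exp (2 * δ) * dilatedFejerKernel T (y - δ - u) := by
          refine setIntegral_mono_on hint.integrableOn (hkint.const_mul _).integrableOn
            measurableSet_Icc fun u hu ↦ mul_le_mul_of_nonneg_right ?_ (hker u)
          refine (le_mul_exp_sub_of_monotone_mul_exp hmono (show u ≤ y by linarith [hu.2])).trans ?_
          exact mul_le_mul_of_nonneg_left (Real.exp_le_exp.mpr (by linarith [hu.1])) (hnonneg y)
      _ ≤ _ := by
          rw [integral_const_mul, ← integral_dilatedFejerKernel_sub hT (y - δ)]
          exact mul_le_mul_of_nonneg_left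
            (setIntegral_le_integral hkint (ae_of_all _ hker)) hconst
  have hfar : ∫ u in sᶜ, g u * dilatedFejerKernel T (y - δ - u) ≤
      C * ∫ u in sᶜ, dilatedFejerKernel T (y - δ - u) := by
    rw [← integral_const_mul]
    exact setIntegral_mono hint.integrableOn (hkint.const_mul _).integrableOn
      fun u ↦ mul_le_mul_of_nonneg_right (hle u) (hker u)
  calc _ ≤ ∫ u, g u * dilatedFejerKernel T (y - δ - u) :=
        setIntegral_le_integral hint (ae_of_all _ fun u ↦ mul_nonneg (hnonneg u) (hker u))
    _ = _ := (integral_add_compl measurableSet_Icc hint).symm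
    _ ≤ _ := by
        rw [htail]
        exact add_le_add hnear hfar

lemma tendsto_nhdsGT_zero_intervalIntegral_fejerKernel :
    Tendsto (fun δ : ℝ ↦ ∫ v in (-((δ ^ 2)⁻¹ * δ))..((δ ^ 2)⁻¹ * δ), fejerKernel v) (𝓝[>] 0)
      (𝓝 (∫ v, fejerKernel v)) := by
  refine (tendsto_intervalIntegral_fejerKernel.comp tendsto_inv_nhdsGT_zero).congr' ?_
  filter_upwards [self_mem_nhdsWithin] with δ hδ
  have hδ0 : 0 < δ := hδ
  rw [Function.comp, show (δ ^ 2)⁻¹ * δ = δ⁻¹ by field_simp]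

/-- `δ` is the half-width of the window around `y` and `T = δ⁻²` the dilation, so that the kernel
concentrates in the window as `δ` tends to `0`. -/
lemma tendsto_of_tendsto_setIntegral_mul_dilatedFejerKernel_sub (hmeas : Measurable g)
    (hnonneg : ∀ u, 0 ≤ g u) (hle : ∀ u, g u ≤ C) (hmono : Monotone fun u ↦ g u * Real.exp u)
    {c : ℝ} (hconv : ∀ T : ℝ, 0 < T →
      Tendsto (fun x ↦ ∫ u in Set.Ioi (0 : ℝ), g u * dilatedFejerKernel T (x - u)) atTop
        (𝓝 (c * ∫ v, fejerKernel v))) :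
    Tendsto g atTop (𝓝 c) := by
  set m := ∫ v, fejerKernel v
  have hm : 0 < m := integral_fejerKernel_pos
  have hmass := tendsto_nhdsGT_zero_intervalIntegral_fejerKernel
  have hexp (k : ℝ) : Tendsto (fun δ : ℝ ↦ Real.exp (k * δ)) (𝓝[>] 0) (𝓝 1) := by
    have hcont : Continuous fun δ : ℝ ↦ Real.exp (k * δ) := by fun_prop
    simpa using (hcont.tendsto 0).mono_left nhdsWithin_le_nhds
  refine tendsto_order.mpr ⟨fun a ha ↦ ?_, fun a ha ↦ ?_⟩
  · have hlim := (((hexp 2).const_mul a).mul_const m).add ((hmass.const_sub m).const_mul C)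
    have hlt : a * 1 * m + C * (m - m) < c * m := by nlinarith
    obtain ⟨δ, hδ, hδ0 : 0 < δ⟩ := ((hlim.eventually_lt_const hlt).and self_mem_nhdsWithin).exists
    have hconvδ := (hconv (δ ^ 2)⁻¹ (by positivity)).comp
      (tendsto_atTop_add_const_right atTop (-δ) tendsto_id)
    filter_upwards [hconvδ.eventually_const_lt hδ] with y hy
    simp only [Function.comp, id, ← sub_eq_add_neg] at hy
    have hbound := hy.trans_le (setIntegral_le_mul_integral_fejerKernel_add hmeas hnonneg hle hmono
      (by positivity) hδ0.le y)
    have hscaled : a * (Real.exp (2 * δ) * m) < g y * (Real.exp (2 * δ) * m) := by linarith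
    exact lt_of_mul_lt_mul_right hscaled (by positivity)
  · have hlim := ((hexp (-2)).const_mul a).mul hmass
    have hlt : c * m < a * 1 * m := by nlinarith
    obtain ⟨δ, ⟨hδ, hδm⟩, hδ0 : 0 < δ⟩ := (((hlim.eventually_const_lt hlt).and
      (hmass.eventually_const_lt hm)).and self_mem_nhdsWithin).exists
    have hconvδ := (hconv (δ ^ 2)⁻¹ (by positivity)).comp
      (tendsto_atTop_add_const_right atTop δ tendsto_id)
    filter_upwards [hconvδ.eventually_lt_const hδ, eventually_gt_atTop 0] with y hy hy0
    simp only [Function.comp, id] at hy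
    have hbound := (mul_integral_fejerKernel_le_setIntegral hmeas hnonneg hle hmono
      (by positivity) hδ0.le hy0).trans_lt hy
    rw [neg_mul, mul_assoc, mul_assoc] at hbound
    exact lt_of_mul_lt_mul_right hbound (by positivity)

theorem wienerIkehara (hmeas : Measurable g) (hnonneg : ∀ u, 0 ≤ g u) (hle : ∀ u, g u ≤ C)
    (hmono : Monotone fun u ↦ g u * Real.exp u) {c : ℝ} {H : ℂ → ℂ}
    (hH : ContinuousOn H {s | 0 ≤ s.re})
    (hlaplace : ∀ w : ℂ, 0 < w.re →
      ∫ u in Set.Ioi (0 : ℝ), ((g u : ℂ) - c) * Complex.exp (-w * u) = H w) :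
    Tendsto g atTop (𝓝 c) := by
  refine tendsto_of_tendsto_setIntegral_mul_dilatedFejerKernel_sub hmeas hnonneg hle hmono
    fun T hT ↦ ?_
  have hbound (u : ℝ) : ‖(g u : ℂ) - c‖ ≤ C + |c| := by
    refine (norm_sub_le _ _).trans (add_le_add ?_ (Complex.norm_real c).le)
    rw [Complex.norm_real, Real.norm_of_nonneg (hnonneg u)]
    exact hle u
  have hmeas_sub : Measurable fun u ↦ (g u : ℂ) - c :=
    (Complex.measurable_ofReal.comp hmeas).sub_const _
  have hzero := (Complex.continuous_re.tendsto _).comp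
    (tendsto_setIntegral_mul_dilatedFejerKernel_sub_zero hmeas_sub hbound hH hlaplace hT)
  have hsum := hzero.add ((tendsto_setIntegral_Ioi_dilatedFejerKernel_sub hT).const_mul c)
  rw [Complex.zero_re, zero_add] at hsum
  refine hsum.congr fun x ↦ ?_
  have hint := (integrable_mul_dilatedFejerKernel_sub hmeas hnonneg hle hT.ne' x).integrableOn
    (s := Set.Ioi 0)
  have hkint := (integrable_dilatedFejerKernel_sub hT.ne' x).integrableOn (s := Set.Ioi 0)
  have hreal : ∫ u in Set.Ioi (0 : ℝ), ((g u : ℂ) - c) * dilatedFejerKernel T (x - u) =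
      ((∫ u in Set.Ioi (0 : ℝ), (g u - c) * dilatedFejerKernel T (x - u) : ℝ) : ℂ) := by
    rw [← integral_complex_ofReal]
    push_cast
    rfl
  rw [Function.comp, hreal, Complex.ofReal_re]
  simp only [sub_mul]
  rw [integral_sub hint (hkint.const_mul c), integral_const_mul, sub_add_cancel]

end Tauberian

end WienerIkehara

section PrimeNumberTheorem

open MeasureTheory Filter Topology ArithmeticFunction

lemma LSeries_vonMangoldt_eq_mul_integral_psi {s : ℂ} (hs : 1 < s.re) :
    LSeries (fun n ↦ (vonMangoldt n : ℂ)) s =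
      s * ∫ t in Set.Ioi (1 : ℝ), (Chebyshev.psi t : ℂ) * (t : ℂ) ^ (-(s + 1)) := by
  have hpsi (t : ℝ) : ∑ k ∈ Finset.Icc 1 ⌊t⌋₊, vonMangoldt k = Chebyshev.psi t := rfl
  rw [LSeries_eq_mul_integral_of_nonneg (fun n ↦ vonMangoldt n) (r := 1) zero_le_one hs ?_
    fun n ↦ vonMangoldt_nonneg]
  · simp only [← Complex.ofReal_sum, hpsi]
  · refine Asymptotics.IsBigO.of_bound (Real.log 4 + 4) (Eventually.of_forall fun n ↦ ?_)
    have hpsi_nat : ∑ k ∈ Finset.Icc 1 n, vonMangoldt k = Chebyshev.psi n := by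
      rw [← hpsi, Nat.floor_natCast]
    rw [hpsi_nat, Real.norm_of_nonneg (Chebyshev.psi_nonneg _), Real.rpow_one,
      Real.norm_of_nonneg n.cast_nonneg]
    exact Chebyshev.psi_le_const_mul_self n.cast_nonneg

/-- This is where the nonvanishing of `ζ` on the line `Re s = 1` enters. -/
lemma exists_continuousOn_eq_integral_psi_sub : ∃ H : ℂ → ℂ, ContinuousOn H {s | 1 ≤ s.re} ∧
    ∀ s : ℂ, 1 < s.re → (∫ t in Set.Ioi (1 : ℝ), (Chebyshev.psi t : ℂ) * (t : ℂ) ^ (-(s + 1)))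
      - 1 / (s - 1) = H s := by
  refine ⟨fun s ↦ (vonMangoldt.LFunctionResidueClassAux (1 : ZMod 1) s - 1) / s,
    ((vonMangoldt.continuousOn_LFunctionResidueClassAux (1 : ZMod 1)).sub
      continuousOn_const).div continuousOn_id ?_, fun s hs ↦ ?_⟩
  · rintro _ hs rfl
    exact absurd hs (by simp)
  · have hs0 : s ≠ 0 := by rintro rfl; norm_num at hs
    have hs1 : s - 1 ≠ 0 := by
      rw [sub_ne_zero]
      rintro rfl
      norm_num at hs
    have hresidueClass (n : ℕ) : vonMangoldt.residueClass (1 : ZMod 1) n = vonMangoldt n := by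
      apply Set.indicator_of_mem
      exact Subsingleton.elim _ _
    have haux := vonMangoldt.eqOn_LFunctionResidueClassAux (q := 1) (a := 1) isUnit_one hs
    simp only [hresidueClass, Nat.totient_one, Nat.cast_one, inv_one,
      LSeries_vonMangoldt_eq_mul_integral_psi hs] at haux
    simp only [haux]
    field_simp
    ring

lemma cexp_smul_psi_mul_cpow (u : ℝ) (w : ℂ) :
    Real.exp u • ((Chebyshev.psi (Real.exp u) : ℂ) * (Real.exp u : ℂ) ^ (-(1 + w + 1))) =
      ((Chebyshev.psi (Real.exp u) * Real.exp (-u) : ℝ) : ℂ) * Complex.exp (-w * u) := by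
  have hexp : Complex.exp u * Complex.exp (u * -(1 + w + 1)) =
      Complex.exp (-u) * Complex.exp (-w * u) := by
    rw [← Complex.exp_add, ← Complex.exp_add]
    ring_nf
  rw [Complex.real_smul, Complex.cpow_def_of_ne_zero (mod_cast (Real.exp_pos u).ne'),
    ← Complex.ofReal_log (Real.exp_pos u).le, Real.log_exp]
  push_cast
  linear_combination (Chebyshev.psi (Real.exp u) : ℂ) * hexp

lemma tendsto_psi_exp_mul_exp_neg :
    Tendsto (fun u : ℝ ↦ Chebyshev.psi (Real.exp u) * Real.exp (-u)) atTop (𝓝 1) := by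
  obtain ⟨H, hH, hHeq⟩ := exists_continuousOn_eq_integral_psi_sub
  have hmeas : Measurable fun u : ℝ ↦ Chebyshev.psi (Real.exp u) * Real.exp (-u) :=
    (Chebyshev.psi_mono.measurable.comp Real.measurable_exp).mul (by fun_prop)
  have hnonneg (u : ℝ) : 0 ≤ Chebyshev.psi (Real.exp u) * Real.exp (-u) :=
    mul_nonneg (Chebyshev.psi_nonneg _) (Real.exp_pos _).le
  have hle (u : ℝ) : Chebyshev.psi (Real.exp u) * Real.exp (-u) ≤ Real.log 4 + 4 := by
    rw [Real.exp_neg, ← div_eq_mul_inv, div_le_iff₀ (Real.exp_pos u)]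
    exact Chebyshev.psi_le_const_mul_self (Real.exp_pos u).le
  have hmono : Monotone fun u : ℝ ↦
      Chebyshev.psi (Real.exp u) * Real.exp (-u) * Real.exp u := by
    intro u v huv
    simpa [mul_assoc, ← Real.exp_add] using Chebyshev.psi_mono (Real.exp_monotone huv)
  refine wienerIkehara hmeas hnonneg hle hmono (H := fun w ↦ H (1 + w))
    (hH.comp (by fun_prop) fun w hw ↦ by simpa using hw) fun w hw ↦ ?_
  have hw' : (-w).re < 0 := by simpa using hw
  have hexp := integrableOn_exp_mul_complex_Ioi hw' 0
  have hint := hexp.bdd_mul (Complex.measurable_ofReal.comp hmeas).aestronglyMeasurable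
    (ae_of_all _ fun u ↦ by
      rw [Function.comp, Complex.norm_real, Real.norm_of_nonneg (hnonneg u)]; exact hle u)
  have hsubst := integral_comp_exp_Ioi
    (fun t : ℝ ↦ (Chebyshev.psi t : ℂ) * (t : ℂ) ^ (-(1 + w + 1))) 0
  simp only [cexp_smul_psi_mul_cpow, Real.exp_zero] at hsubst
  rw [← hHeq (1 + w) (by simpa using hw), ← hsubst]
  simp only [sub_mul, Function.comp] at hint ⊢
  rw [integral_sub hint (hexp.const_mul _), integral_const_mul, integral_exp_mul_complex_Ioi hw' 0]
  simp

theorem tendsto_psi_div_self : Tendsto (fun x : ℝ ↦ Chebyshev.psi x / x) atTop (𝓝 1) := by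
  refine (tendsto_psi_exp_mul_exp_neg.comp Real.tendsto_log_atTop).congr' ?_
  filter_upwards [eventually_gt_atTop 0] with x hx
  rw [Function.comp, Real.exp_neg, Real.exp_log hx, div_eq_mul_inv]

theorem tendsto_theta_div_self : Tendsto (fun x : ℝ ↦ Chebyshev.theta x / x) atTop (𝓝 1) := by
  have hsqrt : Real.sqrt =o[atTop] (id : ℝ → ℝ) := by
    refine Asymptotics.isLittleO_of_tendsto (by simp) ?_
    simp only [id, Real.sqrt_div_self]
    exact Real.tendsto_sqrt_atTop.inv_tendsto_atTop
  have hdiff := (Chebyshev.isBigO_psi_sub_theta_sqrt.trans_isLittleO hsqrt).tendsto_div_nhds_zero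
  simpa [sub_div] using tendsto_psi_div_self.sub hdiff

end PrimeNumberTheorem

section PartialFractions

open Polynomial

variable {R S : Type*} [CommRing R] [CommRing S] [Algebra R S]

lemma sum_choose_mul_pow_mul_pow_succ (a b : S) (p q : ℕ) :
    ∑ i ∈ Finset.range (p + 2), ((q + 1 + i).choose i : S) * a ^ i * b ^ (q + 2) =
      a * ∑ i ∈ Finset.range (p + 1), ((q + 1 + i).choose i : S) * a ^ i * b ^ (q + 2) +
        b * ∑ i ∈ Finset.range (p + 2), ((q + i).choose i : S) * a ^ i * b ^ (q + 1) := by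
  have hpascal (i : ℕ) :
      (q + 1 + (i + 1)).choose (i + 1) = (q + 1 + i).choose i + (q + (i + 1)).choose (i + 1) := by
    rw [← add_assoc, Nat.choose_succ_succ, show q + (i + 1) = q + 1 + i by ring]
  rw [Finset.sum_range_succ', Finset.sum_range_succ' _ (p + 1), mul_add, ← add_assoc,
    Finset.mul_sum, Finset.mul_sum, ← Finset.sum_add_distrib]
  congr 1
  · refine Finset.sum_congr rfl fun i _ ↦ ?_
    rw [hpascal]
    push_cast
    ring
  · simp only [add_zero, Nat.choose_zero_right, Nat.cast_one, pow_zero, one_mul]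
    ring

/-- For `a` and `b` the probabilities of the two outcomes of a coin toss, this says that one of the
outcomes is the first to occur more than `p`, respectively `q`, times. -/
lemma sum_choose_mul_pow_add_sum_choose_mul_pow_eq_one {a b : S} (hab : a + b = 1) (p q : ℕ) :
    (∑ i ∈ Finset.range (p + 1), ((q + i).choose i : S) * a ^ i * b ^ (q + 1)) +
      ∑ i ∈ Finset.range (q + 1), ((p + i).choose i : S) * b ^ i * a ^ (p + 1) = 1 := by
  have hgeom {x y : S} (hxy : x + y = 1) (m : ℕ) :
      y ^ (m + 1) + ∑ i ∈ Finset.range (m + 1), y ^ i * x = 1 := by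
    rw [← Finset.sum_mul, eq_sub_of_add_eq hxy, geom_sum_mul_neg]
    ring
  induction p generalizing q with
  | zero => simpa using hgeom hab q
  | succ p ihp =>
    induction q with
    | zero => simpa [add_comm] using hgeom (add_comm b a ▸ hab) (p + 1)
    | succ q ihq =>
      rw [sum_choose_mul_pow_mul_pow_succ a b p q, sum_choose_mul_pow_mul_pow_succ b a q p]
      linear_combination a * ihp (q + 1) + b * ihq + hab

lemma sum_choose_mul_pow_add_pow_eq_one {a b : S} (hab : a + b = 1) (e : ℕ) :
    ∑ j ∈ Finset.range (e + 1),
      ((2 * e - j).choose e : S) * (a ^ (e - j) * b ^ (e + 1) + a ^ (e + 1) * b ^ (e - j)) = 1 := by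
  rw [← sum_choose_mul_pow_add_sum_choose_mul_pow_eq_one hab e e, ← Finset.sum_add_distrib,
    ← Finset.sum_range_reflect]
  refine Finset.sum_congr rfl fun i hi ↦ ?_
  rw [Finset.mem_range] at hi
  rw [show 2 * e - (e + 1 - 1 - i) = e + i by omega, show e - (e + 1 - 1 - i) = i by omega,
    Nat.choose_symm_add]
  ring

/-- The common coefficient of `x⁻⁽ʲ⁺¹⁾` and `(1 - x)⁻⁽ʲ⁺¹⁾` in the partial fraction expansion of
`f(x (1 - x)) / (x (1 - x))ᴷ⁺¹`. -/
noncomputable def poleCoeff (f : R[X]) (K j : ℕ) : R :=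
  ∑ e ∈ Finset.Icc j K, f.coeff (K - e) * ((2 * e - j).choose e : R)

/-- The polynomial part of the partial fraction expansion of `f(x (1 - x)) / (x (1 - x))ᴷ⁺¹`. -/
noncomputable def polyPart (f : R[X]) (K : ℕ) : R[X] :=
  ∑ e ∈ Finset.range (f.natDegree - K), C (f.coeff (K + 1 + e)) * (X * (1 - X)) ^ e

lemma natDegree_X_mul_one_sub_X_pow_le (e : ℕ) :
    ((X * (1 - X) : R[X]) ^ e).natDegree ≤ 2 * e := by
  rw [mul_comm 2 e]
  exact natDegree_pow_le_of_le e (by compute_degree)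

lemma natDegree_polyPart_le (f : R[X]) (K : ℕ) :
    (polyPart f K).natDegree ≤ 2 * (f.natDegree - K - 1) := by
  refine natDegree_sum_le_of_forall_le _ _ fun e he ↦ ?_
  rw [Finset.mem_range] at he
  exact (natDegree_C_mul_le _ _).trans ((natDegree_X_mul_one_sub_X_pow_le e).trans (by omega))

lemma aeval_polyPart {a b : S} (hab : a + b = 1) (f : R[X]) (K : ℕ) :
    aeval a (polyPart f K) = ∑ e ∈ Finset.range (f.natDegree - K),
      algebraMap R S (f.coeff (K + 1 + e)) * (a * b) ^ e := by
  simp [polyPart, eq_sub_of_add_eq' hab]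

lemma sum_poleCoeff_mul {a b : S} (hab : a + b = 1) (f : R[X]) (K : ℕ) :
    ∑ j ∈ Finset.range (K + 1), algebraMap R S (poleCoeff f K j) *
      (a ^ (K - j) * b ^ (K + 1) + a ^ (K + 1) * b ^ (K - j)) =
      ∑ e ∈ Finset.range (K + 1), algebraMap R S (f.coeff e) * (a * b) ^ e := by
  simp only [poleCoeff, map_sum, map_mul, map_natCast, Finset.sum_mul]
  rw [Finset.sum_comm' (t' := Finset.range (K + 1)) (s' := fun e ↦ Finset.range (e + 1))
    (by simp only [Finset.mem_range, Finset.mem_Icc]; omega),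
    ← Finset.sum_range_reflect _ (K + 1)]
  refine Finset.sum_congr rfl fun i hi ↦ ?_
  rw [Finset.mem_range] at hi
  rw [show K + 1 - 1 - i = K - i by omega, show K - (K - i) = i by omega]
  conv_rhs => rw [← mul_one (_ * _), ← sum_choose_mul_pow_add_pow_eq_one hab (K - i),
    Finset.mul_sum]
  refine Finset.sum_congr rfl fun j hj ↦ ?_
  rw [Finset.mem_range] at hj
  rw [show K - j = i + (K - i - j) by omega, show K + 1 = i + (K - i + 1) by omega]
  simp only [mul_pow, pow_add]
  ring

theorem aeval_mul_eq_partialFractions {a b : S} (hab : a + b = 1) (f : R[X]) (K : ℕ) :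
    aeval (a * b) f = (a * b) ^ (K + 1) * aeval a (polyPart f K) +
      ∑ j ∈ Finset.range (K + 1), algebraMap R S (poleCoeff f K j) *
        (a ^ (K - j) * b ^ (K + 1) + a ^ (K + 1) * b ^ (K - j)) := by
  rw [sum_poleCoeff_mul hab, aeval_polyPart hab, add_comm, Finset.mul_sum,
    aeval_eq_sum_range' (n := K + 1 + (f.natDegree - K)) (by omega), Finset.sum_range_add]
  simp only [Algebra.smul_def]
  congr 1
  refine Finset.sum_congr rfl fun e _ ↦ ?_
  ring

end PartialFractions

section CartierOperator

open Polynomial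

variable (p : ℕ) [hp : Fact p.Prime]

/-- The Cartier operator, in the normalisation that extracts the coefficients of the monomials
`X ^ (m * p + (p - 1))`. -/
noncomputable def cartierOperator : (ZMod p)[X] →ₗ[ZMod p] (ZMod p)[X] where
  toFun h := divX (contract p (X * h))
  map_add' h k := by
    ext m
    simp only [coeff_divX, coeff_contract hp.out.ne_zero, mul_add, coeff_add]
  map_smul' c h := by
    ext m
    simp only [coeff_divX, coeff_contract hp.out.ne_zero, mul_smul_comm, coeff_smul,
      RingHom.id_apply]

lemma coeff_cartierOperator (h : (ZMod p)[X]) (m : ℕ) :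
    (cartierOperator p h).coeff m = h.coeff (m * p + (p - 1)) := by
  have hp1 : 1 ≤ p := hp.out.one_lt.le
  rw [show cartierOperator p h = divX (contract p (X * h)) from rfl, coeff_divX,
    coeff_contract hp.out.ne_zero, show (m + 1) * p = m * p + (p - 1) + 1 by rw [add_mul]; omega,
    coeff_X_mul]

lemma X_mul_cartierOperator (h : (ZMod p)[X]) :
    X * cartierOperator p h = contract p (X * h) := by
  have hcoeff : (contract p (X * h)).coeff 0 = 0 := by
    rw [coeff_contract hp.out.ne_zero, zero_mul, coeff_X_mul_zero]
  have hdivX := divX_mul_X_add (contract p (X * h))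
  rwa [hcoeff, C_0, add_zero, mul_comm] at hdivX

lemma cartierOperator_mul_pow (h a : (ZMod p)[X]) :
    cartierOperator p (h * a ^ p) = cartierOperator p h * a := by
  refine mul_left_cancel₀ X_ne_zero ?_
  rw [X_mul_cartierOperator, ← mul_assoc, ← ZMod.expand_card, contract_mul_expand hp.out.ne_zero,
    ← X_mul_cartierOperator, mul_assoc]

lemma cartierOperator_C_mul (c : ZMod p) (h : (ZMod p)[X]) :
    cartierOperator p (C c * h) = C c * cartierOperator p h := by
  rw [← smul_eq_C_mul, map_smul, smul_eq_C_mul]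

variable {p}

lemma cartierOperator_eq_C {h : (ZMod p)[X]} (hd : h.natDegree < 2 * p - 1) :
    cartierOperator p h = C (h.coeff (p - 1)) := by
  ext m
  rw [coeff_cartierOperator, coeff_C]
  split_ifs with hm
  · simp [hm]
  · have : 1 * p ≤ m * p := Nat.mul_le_mul_right p (Nat.one_le_iff_ne_zero.mpr hm)
    exact coeff_eq_zero_of_natDegree_lt (by omega)

variable {u : (ZMod p)[X]}

lemma cartierOperator_pow_of_lt (hu : u.natDegree = 1) {i : ℕ} (hi : i < 2 * p - 1) :
    cartierOperator p (u ^ i) = if i = p - 1 then 1 else 0 := by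
  have hp1 : 1 < p := hp.out.one_lt
  have small {i : ℕ} (hi : i < p) :
      cartierOperator p (u ^ i) = if i = p - 1 then 1 else 0 := by
    have hdeg : (u ^ i).natDegree = i := by rw [natDegree_pow, hu, mul_one]
    rw [cartierOperator_eq_C (by omega)]
    split_ifs with h
    · have hlead : u.leadingCoeff ≠ 0 := leadingCoeff_ne_zero.mpr (by rintro rfl; simp at hu)
      rw [← h, show (u ^ i).coeff i = (u ^ i).leadingCoeff by rw [leadingCoeff, hdeg],
        leadingCoeff_pow, h, ZMod.pow_card_sub_one_eq_one hlead, C_1]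
    · rw [coeff_eq_zero_of_natDegree_lt (by omega), C_0]
  obtain hip | hip := lt_or_ge i p
  · exact small hip
  · rw [← Nat.sub_add_cancel hip, pow_add, cartierOperator_mul_pow, small (by omega),
      if_neg (by omega), if_neg (by omega), zero_mul]

lemma cartierOperator_pow_two_mul_sub_one (hu : u.natDegree = 1) :
    cartierOperator p (u ^ (2 * p - 1)) = u := by
  have hp1 : 1 < p := hp.out.one_lt
  rw [show 2 * p - 1 = p - 1 + p by omega, pow_add, cartierOperator_mul_pow,
    cartierOperator_pow_of_lt hu (by omega), if_pos rfl, one_mul]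

lemma cartierOperator_comp (hu : u.natDegree = 1) {W : (ZMod p)[X]}
    (hd : W.natDegree < 2 * p - 1) : cartierOperator p (W.comp u) = cartierOperator p W := by
  have hp1 : 1 < p := hp.out.one_lt
  rw [cartierOperator_eq_C hd, comp, eval₂_eq_sum_range' C hd, map_sum]
  have hterm : ∀ i ∈ Finset.range (2 * p - 1), cartierOperator p (C (W.coeff i) * u ^ i) =
      if i = p - 1 then C (W.coeff i) else 0 := fun i hi ↦ by
    rw [cartierOperator_C_mul, cartierOperator_pow_of_lt hu (Finset.mem_range.mp hi), mul_ite,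
      mul_one, mul_zero]
  rw [Finset.sum_congr rfl hterm, Finset.sum_ite_eq', if_pos (Finset.mem_range.mpr (by omega))]

lemma natDegree_one_sub_X : (1 - X : (ZMod p)[X]).natDegree = 1 := by
  rw [← natDegree_neg, neg_sub, ← C_1, natDegree_X_sub_C]

lemma cartierOperator_eq_zero_of_antisymm (hp2 : p ≠ 2) {W : (ZMod p)[X]}
    (hd : W.natDegree < 2 * p - 1) (hW : W.comp (1 - X) = -W) : cartierOperator p W = 0 := by
  have h2 : (2 : (ZMod p)[X]) ≠ 0 := by
    rw [← C_ofNat, C_ne_zero]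
    exact Ring.two_ne_zero (by rwa [ZMod.ringChar_zmod_n])
  have h := cartierOperator_comp natDegree_one_sub_X hd
  rw [hW, map_neg] at h
  refine (mul_eq_zero.mp ?_).resolve_left h2
  linear_combination -h

lemma cartierOperator_sum_pow (hu : u.natDegree = 1) (c : ℕ → ZMod p) {K : ℕ} (hpK : p ≤ K)
    (hK : K < 2 * p) :
    cartierOperator p (∑ j ∈ Finset.range (K + 1), C (c j) * u ^ (2 * p - 1 - j)) =
      C (c 0) * u + C (c p) := by
  have hp1 : 1 < p := hp.out.one_lt
  rw [Finset.sum_range_succ', map_add, map_sum, add_comm]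
  congr 1
  · rw [cartierOperator_C_mul, Nat.sub_zero, cartierOperator_pow_two_mul_sub_one hu]
  · have hterm : ∀ j ∈ Finset.range K,
        cartierOperator p (C (c (j + 1)) * u ^ (2 * p - 1 - (j + 1))) =
          if j = p - 1 then C (c p) else 0 := fun j hj ↦ by
      rw [Finset.mem_range] at hj
      rw [cartierOperator_C_mul, cartierOperator_pow_of_lt hu (by omega)]
      obtain rfl | hjp := eq_or_ne j (p - 1)
      · rw [if_pos (by omega), if_pos rfl, mul_one, Nat.sub_add_cancel hp1.le]
      · rw [if_neg (by omega), if_neg hjp, mul_zero]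
    rw [Finset.sum_congr rfl hterm, Finset.sum_ite_eq', if_pos (Finset.mem_range.mpr (by omega))]

end CartierOperator

section PrimeGain

open Polynomial

variable {p : ℕ} [hp : Fact p.Prime] {f : ℤ[X]} {K : ℕ}

lemma aeval_mul_pow_eq_partialFractions (hK : K < 2 * p) :
    aeval (X * (1 - X) : (ZMod p)[X]) f * (X * (1 - X)) ^ (2 * p - (K + 1)) =
      (polyPart f K).map (Int.castRingHom (ZMod p)) * ((X * (1 - X)) ^ 2) ^ p +
      (∑ j ∈ Finset.range (K + 1), C ((poleCoeff f K j : ℤ) : ZMod p) * X ^ (2 * p - 1 - j)) *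
        ((1 - X) ^ 2) ^ p +
      (∑ j ∈ Finset.range (K + 1), C ((poleCoeff f K j : ℤ) : ZMod p) * (1 - X) ^ (2 * p - 1 - j)) *
        (X ^ 2) ^ p := by
  have hsq (v : (ZMod p)[X]) : (v ^ 2) ^ p = v ^ (K + 1) * v ^ (2 * p - (K + 1)) := by
    rw [← pow_mul, ← pow_add]
    congr 1
    omega
  have hpf := aeval_mul_eq_partialFractions (add_sub_cancel X (1 : (ZMod p)[X])) f K
  rw [aeval_X_left_eq_map, algebraMap_int_eq] at hpf
  rw [hpf, add_mul, add_assoc]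
  congr 1
  · rw [hsq]
    ring
  · rw [Finset.sum_mul, Finset.sum_mul, Finset.sum_mul, ← Finset.sum_add_distrib]
    refine Finset.sum_congr rfl fun j hj ↦ ?_
    rw [Finset.mem_range] at hj
    have hpow (v : (ZMod p)[X]) : v ^ (2 * p - 1 - j) = v ^ (K - j) * v ^ (2 * p - (K + 1)) := by
      rw [← pow_add]
      congr 1
      omega
    rw [hpow, hpow, hsq, hsq, mul_pow, map_intCast, eq_intCast]
    ring

lemma eq_zero_of_mul_sq_add_mul_sq_add_mul_sq_eq_zero {F : Type*} [Field F] {E : F[X]} {a b : F}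
    (h : E * (X * (1 - X)) ^ 2 + (C a * X + C b) * (1 - X) ^ 2 +
      (C a * (1 - X) + C b) * X ^ 2 = 0) : b = 0 ∧ E = 0 := by
  have hb : b = 0 := by simpa using congrArg (eval 0) h
  subst hb
  have hX : X * (E * (X * (1 - X) ^ 2) + C a * (1 - X) ^ 2 + C a * (1 - X) * X) = 0 := by
    rw [← h, C_0]
    ring
  have ha : a = 0 := by
    simpa using congrArg (eval 0) ((mul_eq_zero.mp hX).resolve_left X_ne_zero)
  subst ha
  have hXX : (X * (1 - X) : F[X]) ^ 2 ≠ 0 :=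
    pow_ne_zero 2 (mul_ne_zero X_ne_zero (sub_ne_zero.mpr fun h ↦ by
      simpa using congrArg (eval 0) h))
  exact ⟨rfl, (mul_eq_zero.mp (by simpa using h)).resolve_right hXX⟩

/-- A numerator of the shape `W * V ^ p` with `W` antisymmetric is killed by the Cartier operator,
which is linear over `p`-th powers. -/
theorem poleCoeff_eq_zero_and_cartierOperator_polyPart_eq_zero (hp2 : p ≠ 2) (hpK : p ≤ K)
    (hK : K < 2 * p) {W V : (ZMod p)[X]} (hW : W.natDegree < 2 * p - 1)
    (hWanti : W.comp (1 - X) = -W)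
    (hf : aeval (X * (1 - X) : (ZMod p)[X]) f * (X * (1 - X)) ^ (2 * p - (K + 1)) = W * V ^ p) :
    ((poleCoeff f K p : ℤ) : ZMod p) = 0 ∧
      cartierOperator p ((polyPart f K).map (Int.castRingHom (ZMod p))) = 0 := by
  have h := congrArg (cartierOperator p) ((aeval_mul_pow_eq_partialFractions hK).symm.trans hf)
  rw [cartierOperator_mul_pow, cartierOperator_eq_zero_of_antisymm hp2 hW hWanti, zero_mul,
    map_add, map_add, cartierOperator_mul_pow, cartierOperator_mul_pow, cartierOperator_mul_pow,
    cartierOperator_sum_pow natDegree_X (fun j ↦ ((poleCoeff f K j : ℤ) : ZMod p)) hpK hK,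
    cartierOperator_sum_pow natDegree_one_sub_X
      (fun j ↦ ((poleCoeff f K j : ℤ) : ZMod p)) hpK hK] at h
  exact eq_zero_of_mul_sq_add_mul_sq_add_mul_sq_eq_zero h

lemma dvd_coeff_of_cartierOperator_map_eq_zero {E : ℤ[X]}
    (h : cartierOperator p (E.map (Int.castRingHom (ZMod p))) = 0) {k : ℕ} (hk : p ∣ k + 1) :
    (p : ℤ) ∣ E.coeff k := by
  obtain ⟨m, hm⟩ := hk
  obtain _ | m := m
  · omega
  have hp1 : 1 < p := hp.out.one_lt
  have hindex : m * p + (p - 1) = k := by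
    rw [Nat.mul_succ, mul_comm] at hm
    omega
  have hcoeff := coeff_cartierOperator p (E.map (Int.castRingHom (ZMod p))) m
  rw [h, coeff_zero, hindex, coeff_map, eq_intCast] at hcoeff
  exact (ZMod.intCast_zmod_eq_zero_iff_dvd _ _).mp hcoeff.symm

end PrimeGain

section CoeffDivisibility

open Polynomial

variable {R : Type*} [CommSemiring R] {c : R}

lemma pow_dvd_coeff_mul {u v w : ℕ → ℕ} (hw : ∀ i j, w (i + j) ≤ u i + v j) {f g : R[X]}
    (hf : ∀ i, c ^ u i ∣ f.coeff i) (hg : ∀ j, c ^ v j ∣ g.coeff j) (m : ℕ) :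
    c ^ w m ∣ (f * g).coeff m := by
  rw [coeff_mul]
  refine Finset.dvd_sum fun ij hij ↦ ?_
  rw [← Finset.HasAntidiagonal.mem_antidiagonal.mp hij]
  refine (pow_dvd_pow c (hw ij.1 ij.2)).trans ?_
  rw [pow_add]
  exact mul_dvd_mul (hf ij.1) (hg ij.2)

lemma pow_dvd_coeff_pow {v : ℕ → ℕ → ℕ} (h0 : v 0 0 = 0)
    (hv : ∀ k i j, v (k + 1) (i + j) ≤ v k i + v 1 j) {f : R[X]}
    (hf : ∀ i, c ^ v 1 i ∣ f.coeff i) (k m : ℕ) : c ^ v k m ∣ (f ^ k).coeff m := by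
  induction k generalizing m with
  | zero =>
    rw [pow_zero, coeff_one]
    split_ifs with hm
    · rw [hm, h0, pow_zero]
    · exact dvd_zero _
  | succ k ih =>
    rw [pow_succ]
    exact pow_dvd_coeff_mul (hv k) ih hf m

end CoeffDivisibility

section Numerator

open Polynomial

/-- The quadratic factor of `numerator`, as a polynomial in `t = y (1 - y)`; as a polynomial in `y`
it vanishes at `(13 ± √7) / 27`. -/
noncomputable def quadFactor : ℤ[X] := 42 - 350 * X + 729 * X ^ 2

/-- The integrals that produce the linear forms are those of
`numerator n (y (1 - y)) / (y (1 - y)) ^ (14 * n + 1)`. -/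
noncomputable def numerator (n : ℕ) : ℤ[X] := quadFactor ^ (8 * n) * (1 - 4 * X) ^ (7 * n)

lemma coeff_quadFactor (m : ℕ) : quadFactor.coeff m =
    if m = 0 then 42 else if m = 1 then -350 else if m = 2 then 729 else 0 := by
  unfold quadFactor
  obtain _ | _ | _ | m := m <;> simp [coeff_X, coeff_X_pow]

lemma coeff_one_sub_four_mul_X (m : ℕ) :
    (1 - 4 * X : ℤ[X]).coeff m = if m = 0 then 1 else if m = 1 then -4 else 0 := by
  obtain _ | _ | m := m <;> simp [coeff_X, coeff_one]

lemma natDegree_numerator_le (n : ℕ) : (numerator n).natDegree ≤ 23 * n := by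
  have hquad : quadFactor.natDegree ≤ 2 := by
    unfold quadFactor
    compute_degree
  have hlin : (1 - 4 * X : ℤ[X]).natDegree ≤ 1 := by compute_degree
  refine (natDegree_mul_le_of_le (natDegree_pow_le_of_le _ hquad)
    (natDegree_pow_le_of_le _ hlin)).trans ?_
  omega

lemma aeval_numerator {S : Type*} [CommRing S] [Algebra ℤ S] (n : ℕ) (x : S) :
    aeval x (numerator n) = (42 - 350 * x + 729 * x ^ 2) ^ (8 * n) * (1 - 4 * x) ^ (7 * n) := by
  simp [numerator, quadFactor, map_ofNat]

lemma pow_dvd_coeff_numerator_of_le (n m : ℕ) :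
    (729 : ℤ) ^ (m - 15 * n) ∣ (numerator n).coeff m := by
  refine pow_dvd_coeff_mul (u := fun i ↦ i - 8 * n) (v := fun j ↦ j - 7 * n)
    (w := fun m ↦ m - 15 * n) (by omega)
    (pow_dvd_coeff_pow (v := fun k i ↦ i - k) (by simp) (by omega) (fun i ↦ ?_) _)
    (pow_dvd_coeff_pow (v := fun k i ↦ i - k) (by simp) (by omega) (fun i ↦ ?_) _) m
  · rw [coeff_quadFactor]
    obtain _ | _ | _ | i := i <;> simp
  · rw [coeff_one_sub_four_mul_X]
    obtain _ | _ | i := i <;> simp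

lemma fourteen_pow_dvd_coeff_numerator (n m : ℕ) :
    (14 : ℤ) ^ ((16 * n + 1 - m) / 2) ∣ (numerator n).coeff m := by
  refine pow_dvd_coeff_mul (u := fun i ↦ (2 * (8 * n) + 1 - i) / 2) (v := fun _ ↦ 0)
    (w := fun m ↦ (16 * n + 1 - m) / 2) (by omega)
    (pow_dvd_coeff_pow (v := fun k i ↦ (2 * k + 1 - i) / 2) (by simp) (by omega) (fun i ↦ ?_) _)
    (fun _ ↦ by simp) m
  rw [coeff_quadFactor]
  obtain _ | _ | _ | i := i <;> norm_num

lemma three_pow_dvd_coeff_numerator (n m : ℕ) :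
    (3 : ℤ) ^ (8 * n - m) ∣ (numerator n).coeff m := by
  refine pow_dvd_coeff_mul (u := fun i ↦ 8 * n - i) (v := fun _ ↦ 0) (w := fun m ↦ 8 * n - m)
    (by omega) (pow_dvd_coeff_pow (v := fun k i ↦ k - i) (by simp) (by omega) (fun i ↦ ?_) _)
    (fun _ ↦ by simp) m
  rw [coeff_quadFactor]
  obtain _ | _ | _ | i := i <;> norm_num

lemma fourteen_pow_dvd_poleCoeff (n j : ℕ) :
    (14 : ℤ) ^ ((j + 1) / 2) ∣ poleCoeff (numerator n) (14 * n) j := by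
  refine Finset.dvd_sum fun e he ↦ Dvd.dvd.mul_right ?_ _
  rw [Finset.mem_Icc] at he
  exact (pow_dvd_pow _ (by omega)).trans (fourteen_pow_dvd_coeff_numerator n _)

lemma three_pow_dvd_poleCoeff (n j : ℕ) :
    (3 : ℤ) ^ j ∣ 3 ^ (6 * n) * poleCoeff (numerator n) (14 * n) j := by
  rw [poleCoeff, Finset.mul_sum]
  refine Finset.dvd_sum fun e he ↦ ?_
  rw [Finset.mem_Icc] at he
  rw [← mul_assoc]
  refine Dvd.dvd.mul_right
    (Dvd.dvd.trans ?_ (mul_dvd_mul_left _ (three_pow_dvd_coeff_numerator n _))) _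
  rw [← pow_add]
  exact pow_dvd_pow _ (by omega)

lemma three_pow_dvd_coeff_polyPart (n k : ℕ) :
    (3 : ℤ) ^ (3 * (k + 1)) ∣ 3 ^ (6 * n) * (polyPart (numerator n) (14 * n)).coeff k := by
  rw [polyPart, finsetSum_coeff, Finset.mul_sum]
  refine Finset.dvd_sum fun e _ ↦ ?_
  rw [coeff_C_mul]
  obtain hk | hk := le_or_gt k (2 * e)
  · rw [← mul_assoc]
    refine Dvd.dvd.mul_right
      (Dvd.dvd.trans ?_ (mul_dvd_mul_left _ (pow_dvd_coeff_numerator_of_le n _))) _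
    rw [show (729 : ℤ) = 3 ^ 6 by norm_num, ← pow_mul, ← pow_add]
    exact pow_dvd_pow _ (by omega)
  · rw [coeff_eq_zero_of_natDegree_lt ((natDegree_X_mul_one_sub_X_pow_le e).trans_lt hk),
      mul_zero, mul_zero]
    exact dvd_zero _

lemma natDegree_polyPart_numerator_le (n : ℕ) :
    (polyPart (numerator n) (14 * n)).natDegree ≤ 18 * n - 2 := by
  have hdeg := natDegree_numerator_le n
  exact (natDegree_polyPart_le _ _).trans (by omega)

variable {p : ℕ} [hp : Fact p.Prime]

/-- The part of `numerator n (X (1 - X)) * (X (1 - X)) ^ (2 * p - (14 * n + 1))` that is left after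
extracting a `p`-th power. -/
noncomputable def numeratorCofactor (p n : ℕ) : (ZMod p)[X] :=
  (42 - 350 * (X * (1 - X)) + 729 * (X * (1 - X)) ^ 2) ^ (8 * n - p) *
    (1 - 2 * X) ^ (14 * n - p) * (X * (1 - X)) ^ (2 * p - (14 * n + 1))

lemma natDegree_numeratorCofactor_lt {n : ℕ} (h7 : 7 * n < p) (h8 : p ≤ 8 * n) :
    (numeratorCofactor p n).natDegree < 2 * p - 1 := by
  have hquad : (42 - 350 * (X * (1 - X)) + 729 * (X * (1 - X)) ^ 2 : (ZMod p)[X]).natDegree ≤ 4 :=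
    by compute_degree
  have hlin : (1 - 2 * X : (ZMod p)[X]).natDegree ≤ 1 := by compute_degree
  refine (natDegree_mul_le_of_le (natDegree_mul_le_of_le (natDegree_pow_le_of_le _ hquad)
    (natDegree_pow_le_of_le _ hlin)) (natDegree_X_mul_one_sub_X_pow_le _)).trans_lt ?_
  omega

lemma numeratorCofactor_comp {n : ℕ} (hodd : Odd p) (h8 : p ≤ 8 * n) :
    (numeratorCofactor p n).comp (1 - X) = -numeratorCofactor p n := by
  have hsymm : (1 - X : (ZMod p)[X]) * (1 - (1 - X)) = X * (1 - X) := by ring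
  have hanti : (1 : (ZMod p)[X]) - 2 * (1 - X) = -(1 - 2 * X) := by ring
  have hexp : Odd (14 * n - p) :=
    Nat.Even.sub_odd (by omega) (Even.mul_right (by decide) n) hodd
  simp only [numeratorCofactor, mul_comp, pow_comp, sub_comp, add_comp, one_comp, X_comp,
    ofNat_comp, Nat.cast_ofNat]
  rw [hsymm, hanti, hexp.neg_pow]
  ring

lemma aeval_numerator_mul_eq_numeratorCofactor_mul {n : ℕ} (h8 : p ≤ 8 * n) :
    aeval (X * (1 - X) : (ZMod p)[X]) (numerator n) * (X * (1 - X)) ^ (2 * p - (14 * n + 1)) =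
      numeratorCofactor p n *
        ((42 - 350 * (X * (1 - X)) + 729 * (X * (1 - X)) ^ 2) * (1 - 2 * X)) ^ p := by
  have hquad (v : (ZMod p)[X]) : v ^ (8 * n) = v ^ (8 * n - p) * v ^ p := by
    rw [← pow_add, Nat.sub_add_cancel h8]
  have hlin : (1 - 4 * (X * (1 - X)) : (ZMod p)[X]) ^ (7 * n) =
      (1 - 2 * X) ^ (14 * n - p) * (1 - 2 * X) ^ p := by
    rw [show 1 - 4 * (X * (1 - X)) = (1 - 2 * X : (ZMod p)[X]) ^ 2 by ring, ← pow_mul, ← pow_add]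
    congr 1
    omega
  rw [aeval_numerator, hquad, hlin, numeratorCofactor, mul_pow _ (1 - 2 * X)]
  ring

lemma poleCoeff_numerator_eq_zero_and {n : ℕ} (h7 : 7 * n < p) (h8 : p ≤ 8 * n) :
    ((poleCoeff (numerator n) (14 * n) p : ℤ) : ZMod p) = 0 ∧
      cartierOperator p ((polyPart (numerator n) (14 * n)).map (Int.castRingHom (ZMod p))) = 0 := by
  have hp2 : p ≠ 2 := by omega
  exact poleCoeff_eq_zero_and_cartierOperator_polyPart_eq_zero hp2 (by omega) (by omega)
    (natDegree_numeratorCofactor_lt h7 h8) (numeratorCofactor_comp (hp.out.odd_of_ne_two hp2) h8)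
    (aeval_numerator_mul_eq_numeratorCofactor_mul h8)

lemma prime_dvd_poleCoeff {n s : ℕ} (h7 : 7 * n < p) (h8 : p ≤ 8 * n) (hs0 : 1 ≤ s)
    (hs : s ≤ 14 * n) (hps : p ∣ s) : (p : ℤ) ∣ poleCoeff (numerator n) (14 * n) s := by
  obtain rfl : s = p := by
    obtain ⟨_ | _ | c, rfl⟩ := hps
    · omega
    · ring
    · have : p * 2 ≤ p * (c + 1 + 1) := Nat.mul_le_mul_left p (by omega)
      omega
  exact (ZMod.intCast_zmod_eq_zero_iff_dvd _ _).mp (poleCoeff_numerator_eq_zero_and h7 h8).1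

lemma prime_dvd_coeff_polyPart {n k : ℕ} (h7 : 7 * n < p) (h8 : p ≤ 8 * n) (hk : p ∣ k + 1) :
    (p : ℤ) ∣ (polyPart (numerator n) (14 * n)).coeff k :=
  dvd_coeff_of_cartierOperator_map_eq_zero (poleCoeff_numerator_eq_zero_and h7 h8).2 hk

end Numerator

section PrimeFreeLcm

/-- The least common multiple of `1, …, N`, with one factor `p` removed for each prime
`p ∈ (a, b]`. The division is exact when `b ≤ N`. -/
noncomputable def primeFreeLcm (N a b : ℕ) : ℕ :=
  Nat.lcmUpto N / ∏ p ∈ Finset.Ioc a b with p.Prime, p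

variable {N a b d : ℕ}

lemma dvd_lcmUpto (hd : 1 ≤ d) (hdN : d ≤ N) : d ∣ Nat.lcmUpto N :=
  Finset.dvd_lcm (f := id) (Finset.mem_Icc.mpr ⟨hd, hdN⟩)

lemma primeFreeLcm_mul_prod (hb : b ≤ N) :
    primeFreeLcm N a b * ∏ p ∈ Finset.Ioc a b with p.Prime, p = Nat.lcmUpto N := by
  refine Nat.div_mul_cancel (Finset.prod_primes_dvd _ (fun p hp ↦ ?_) fun p hp ↦ ?_)
  · exact (Finset.mem_filter.mp hp).2.prime
  · obtain ⟨hpab, hprime⟩ := Finset.mem_filter.mp hp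
    exact dvd_lcmUpto hprime.one_lt.le ((Finset.mem_Ioc.mp hpab).2.trans hb)

lemma dvd_primeFreeLcm (hb : b ≤ N) (hd : 1 ≤ d) (hdN : d ≤ N)
    (h : ∀ p ∈ Finset.Ioc a b, p.Prime → ¬p ∣ d) : d ∣ primeFreeLcm N a b := by
  have hcop : d.Coprime (∏ p ∈ Finset.Ioc a b with p.Prime, p) :=
    Nat.Coprime.prod_right fun p hp ↦ by
      obtain ⟨hpab, hprime⟩ := Finset.mem_filter.mp hp
      exact ((hprime.coprime_iff_not_dvd).mpr (h p hpab hprime)).symm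
  refine hcop.dvd_of_dvd_mul_right ?_
  rw [primeFreeLcm_mul_prod hb]
  exact dvd_lcmUpto hd hdN

/-- At most one prime of `(a, b]` divides `d`, and only once; that prime is recovered from `z`. -/
lemma mul_dvd_primeFreeLcm_mul (hb : b ≤ N) (ha : N < (a + 1) ^ 2) (hd : 1 ≤ d) (hdN : d ≤ N)
    {M z : ℤ} (hMz : M ∣ z) (hM : ∀ p ∈ Finset.Ioc a b, p.Prime → IsCoprime (p : ℤ) M)
    (hz : ∀ p ∈ Finset.Ioc a b, p.Prime → p ∣ d → (p : ℤ) ∣ z) :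
    (d : ℤ) * M ∣ primeFreeLcm N a b * z := by
  by_cases h : ∃ p ∈ Finset.Ioc a b, p.Prime ∧ p ∣ d
  · obtain ⟨p, hp, hprime, c, rfl⟩ := h
    have hap : a + 1 ≤ p := (Finset.mem_Ioc.mp hp).1
    have hc0 : 0 < c := Nat.pos_of_mul_pos_left hd
    have hca : c ≤ a := by
      by_contra! hca
      have := Nat.mul_le_mul hap hca
      nlinarith
    have hc : (c : ℤ) ∣ primeFreeLcm N a b := Int.natCast_dvd_natCast.mpr <|
      dvd_primeFreeLcm hb hc0 ((Nat.le_mul_of_pos_left c hprime.pos).trans hdN) fun q hq _ hqc ↦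
        ((Nat.le_of_dvd hc0 hqc).trans hca).not_gt (Finset.mem_Ioc.mp hq).1
    have hpM : (p : ℤ) * M ∣ z := (hM p hp hprime).mul_dvd (hz p hp hprime ⟨c, rfl⟩) hMz
    rw [show ((p * c : ℕ) : ℤ) * M = c * (p * M) by push_cast; ring]
    exact mul_dvd_mul hc hpM
  · push Not at h
    exact mul_dvd_mul (Int.natCast_dvd_natCast.mpr (dvd_primeFreeLcm hb hd hdN h)) hMz

end PrimeFreeLcm

section ConjugatePairs

lemma pow_mul_pow_mem {M : Type*} [CommMonoid M] {N : Submonoid M} {c x : M} (h1 : c * x ∈ N)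
    (h2 : c * x ^ 2 ∈ N) (s : ℕ) : c ^ ((s + 1) / 2) * x ^ s ∈ N := by
  obtain ⟨t, rfl | rfl⟩ := s.even_or_odd'
  · rw [show (2 * t + 1) / 2 = t by omega, pow_mul, ← mul_pow]
    exact pow_mem h2 t
  · rw [show (2 * t + 1 + 1) / 2 = t + 1 by omega, pow_succ c, pow_succ x, pow_mul,
      mul_mul_mul_comm, ← mul_pow]
    exact mul_mem (pow_mem h2 t) h1

/-- The pairs `(x, x')` of conjugate elements of `ℤ[√d]`. -/
noncomputable def conjugatePairs (d : ℕ) : Subring (ℝ × ℝ) :=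
  ((Zsqrtd.lift (d := d) ⟨√(d : ℝ), by simp⟩).prod
    (Zsqrtd.lift (d := d) ⟨-√(d : ℝ), by simp⟩)).range

variable {d : ℕ}

lemma mem_conjugatePairs {x : ℝ × ℝ} :
    x ∈ conjugatePairs d ↔ ∃ a b : ℤ, (a + b * √(d : ℝ), a - b * √(d : ℝ)) = x := by
  constructor
  · rintro ⟨z, rfl⟩
    exact ⟨z.re, z.im, by simp [sub_eq_add_neg]⟩
  · rintro ⟨a, b, rfl⟩
    exact ⟨⟨a, b⟩, by simp [sub_eq_add_neg]⟩

lemma sqrt_mul_sub_mem_range {x : ℝ × ℝ} (hx : x ∈ conjugatePairs d) :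
    √(d : ℝ) * (x.1 - x.2) ∈ (Int.castRingHom ℝ).range := by
  obtain ⟨a, b, rfl⟩ := mem_conjugatePairs.mp hx
  refine ⟨2 * d * b, ?_⟩
  rw [eq_intCast]
  push_cast
  linear_combination (-2 * (b : ℝ)) * Real.mul_self_sqrt (Nat.cast_nonneg (α := ℝ) d)

lemma mul_sqrt_mul_div_mul_sub_mem_range {D M z : ℤ} {m : ℕ} (hm : m ≠ 0)
    (hdvd : (m : ℤ) * M ∣ D * z) {x : ℝ × ℝ} (hx : (M : ℝ × ℝ) * x ∈ conjugatePairs d) :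
    (D : ℝ) * (√(d : ℝ) * (z / m * (x.1 - x.2))) ∈ (Int.castRingHom ℝ).range := by
  obtain ⟨t, ht⟩ := hdvd
  have ht' : (D : ℝ) * z = m * M * t := mod_cast ht
  have heq : (D : ℝ) * (√(d : ℝ) * (z / m * (x.1 - x.2))) =
      t * (√(d : ℝ) * (((M : ℝ × ℝ) * x).1 - ((M : ℝ × ℝ) * x).2)) := by
    simp only [Prod.fst_mul, Prod.snd_mul, Prod.fst_intCast, Prod.snd_intCast]
    field_simp
    linear_combination √(d : ℝ) * (x.1 - x.2) * ht'
  rw [heq]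
  exact mul_mem ⟨t, rfl⟩ (sqrt_mul_sub_mem_range hx)

end ConjugatePairs

section PartialFractionIntegral

open Polynomial

variable (f : ℤ[X]) (K : ℕ)

/-- An antiderivative on `(0, 1)` of `f(y (1 - y)) / (y (1 - y))ᴷ⁺¹`. -/
noncomputable def partialFractionPrimitive (y : ℝ) : ℝ :=
  ∑ k ∈ Finset.range ((polyPart f K).natDegree + 1),
      ((polyPart f K).coeff k : ℝ) / (k + 1 : ℕ) * y ^ (k + 1) +
    (((poleCoeff f K 0 : ℤ) : ℝ) * (Real.log y - Real.log (1 - y)) +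
      ∑ j ∈ Finset.range K, ((poleCoeff f K (j + 1) : ℤ) : ℝ) / (j + 1 : ℕ) *
        ((1 - y)⁻¹ ^ (j + 1) - y⁻¹ ^ (j + 1)))

variable {y : ℝ}

lemma aeval_div_eq_sum (hy0 : 0 < y) (hy1 : y < 1) :
    aeval (y * (1 - y)) f / (y * (1 - y)) ^ (K + 1) =
      ∑ k ∈ Finset.range ((polyPart f K).natDegree + 1), ((polyPart f K).coeff k : ℝ) * y ^ k +
      ∑ j ∈ Finset.range (K + 1), ((poleCoeff f K j : ℤ) : ℝ) *
        (y⁻¹ ^ (j + 1) + (1 - y)⁻¹ ^ (j + 1)) := by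
  have hy : y ≠ 0 := hy0.ne'
  have hy' : 1 - y ≠ 0 := (sub_pos.mpr hy1).ne'
  rw [aeval_mul_eq_partialFractions (add_sub_cancel y 1), aeval_eq_sum_range, add_div,
    mul_div_cancel_left₀ _ (pow_ne_zero _ (mul_ne_zero hy hy')), Finset.sum_div]
  simp only [zsmul_eq_mul, eq_intCast]
  congr 1
  refine Finset.sum_congr rfl fun j hj ↦ ?_
  obtain ⟨i, rfl⟩ := Nat.exists_eq_add_of_le' (Finset.mem_range_succ_iff.mp hj)
  rw [Nat.add_sub_cancel, add_assoc, inv_pow, inv_pow, mul_pow, pow_add y i, pow_add (1 - y) i]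
  field_simp

lemma hasDerivAt_inv_pow_sub_inv_pow (hy0 : 0 < y) (hy1 : y < 1) (j : ℕ) :
    HasDerivAt (fun y : ℝ ↦ (1 - y)⁻¹ ^ (j + 1) - y⁻¹ ^ (j + 1))
      ((j + 1 : ℕ) * (y⁻¹ ^ (j + 2) + (1 - y)⁻¹ ^ (j + 2))) y := by
  have hy : y ≠ 0 := hy0.ne'
  have hy' : 1 - y ≠ 0 := (sub_pos.mpr hy1).ne'
  refine (((((hasDerivAt_id y).const_sub 1).inv hy').pow (j + 1)).sub
    ((hasDerivAt_inv hy).pow (j + 1))).congr_deriv ?_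
  simp only [Nat.add_sub_cancel, Pi.inv_apply, id, inv_pow]
  field_simp
  ring

lemma hasDerivAt_log_sub_log (hy0 : 0 < y) (hy1 : y < 1) :
    HasDerivAt (fun y : ℝ ↦ Real.log y - Real.log (1 - y)) (y⁻¹ + (1 - y)⁻¹) y := by
  refine ((Real.hasDerivAt_log hy0.ne').sub
    (((hasDerivAt_id y).const_sub 1).log (sub_pos.mpr hy1).ne')).congr_deriv ?_
  simp [div_eq_mul_inv]

lemma hasDerivAt_partialFractionPrimitive (hy0 : 0 < y) (hy1 : y < 1) :
    HasDerivAt (partialFractionPrimitive f K)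
      (aeval (y * (1 - y)) f / (y * (1 - y)) ^ (K + 1)) y := by
  rw [aeval_div_eq_sum f K hy0 hy1, Finset.sum_range_succ' _ K]
  refine HasDerivAt.fun_add (HasDerivAt.fun_sum fun k _ ↦ ?_) ?_
  · refine ((hasDerivAt_pow (k + 1) y).const_mul
      (((polyPart f K).coeff k : ℝ) / (k + 1 : ℕ))).congr_deriv ?_
    rw [Nat.add_sub_cancel]
    field_simp
  · rw [add_comm]
    refine HasDerivAt.fun_add ?_ (HasDerivAt.fun_sum fun j _ ↦ ?_)
    · simpa using (hasDerivAt_log_sub_log hy0 hy1).const_mul ((poleCoeff f K 0 : ℤ) : ℝ)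
    · refine ((hasDerivAt_inv_pow_sub_inv_pow hy0 hy1 j).const_mul
        (((poleCoeff f K (j + 1) : ℤ) : ℝ) / (j + 1 : ℕ))).congr_deriv ?_
      field_simp

lemma continuousOn_aeval_div :
    ContinuousOn (fun y : ℝ ↦ aeval (y * (1 - y)) f / (y * (1 - y)) ^ (K + 1))
      (Set.Ioo 0 1) := by
  refine ContinuousOn.div (by fun_prop) (by fun_prop) fun y hy ↦ ?_
  exact pow_ne_zero _ (mul_pos hy.1 (sub_pos.mpr hy.2)).ne'

theorem integral_aeval_div {a b : ℝ} (ha : 0 < a) (hab : a ≤ b) (hb : b < 1) :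
    ∫ y in a..b, aeval (y * (1 - y)) f / (y * (1 - y)) ^ (K + 1) =
      partialFractionPrimitive f K b - partialFractionPrimitive f K a := by
  have hsub : Set.uIcc a b ⊆ Set.Ioo 0 1 := by
    rw [Set.uIcc_of_le hab]
    exact Set.Icc_subset_Ioo ha hb
  exact intervalIntegral.integral_eq_sub_of_hasDerivAt
    (fun y hy ↦ hasDerivAt_partialFractionPrimitive f K (hsub hy).1 (hsub hy).2)
    ((continuousOn_aeval_div f K).mono hsub).intervalIntegrable

end PartialFractionIntegral

section LinearForm

open Polynomial

/-- The larger of the two zeros of `quadFactor (y (1 - y))` between which the integral is taken. -/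
noncomputable def upperRoot : ℝ := (13 + √7) / 27

/-- The smaller of the two zeros of `quadFactor (y (1 - y))` between which the integral is taken. -/
noncomputable def lowerRoot : ℝ := (13 - √7) / 27

/-- The integral whose value is a linear form in `1` and `√7 * log ((√7 - 1) / (√7 + 1))`, up to a
factor `√7`. -/
noncomputable def rootIntegral (n : ℕ) : ℝ :=
  ∫ y in lowerRoot..upperRoot, aeval (y * (1 - y)) (numerator n) / (y * (1 - y)) ^ (14 * n + 1)

/-- A common denominator of the coefficients of the linear form given by `√7 * rootIntegral n`. -/
noncomputable def denominator (n : ℕ) : ℕ := primeFreeLcm (18 * n) (7 * n) (8 * n) * 3 ^ (6 * n)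

lemma sqrt_seven_mul_self : √7 * √7 = (7 : ℝ) := Real.mul_self_sqrt (by norm_num)

lemma sqrt_seven_lt : √7 < 2.6458 := by
  rw [Real.sqrt_lt' (by norm_num)]
  norm_num

lemma lt_sqrt_seven : 2.6457 < √7 := by
  rw [Real.lt_sqrt (by norm_num)]
  norm_num

lemma lt_lowerRoot : 0.38 < lowerRoot := by
  unfold lowerRoot
  linarith [sqrt_seven_lt]

lemma lowerRoot_lt_upperRoot : lowerRoot < upperRoot := by
  unfold lowerRoot upperRoot
  linarith [lt_sqrt_seven]

lemma upperRoot_lt : upperRoot < 0.58 := by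
  unfold upperRoot
  linarith [sqrt_seven_lt]

lemma inv_upperRoot : upperRoot⁻¹ = (13 - √7) / 6 := by
  rw [inv_eq_iff_eq_inv, eq_comm, inv_eq_of_mul_eq_one_left]
  unfold upperRoot
  linear_combination -(1 / 162) * sqrt_seven_mul_self

lemma inv_lowerRoot : lowerRoot⁻¹ = (13 + √7) / 6 := by
  rw [inv_eq_iff_eq_inv, eq_comm, inv_eq_of_mul_eq_one_left]
  unfold lowerRoot
  linear_combination -(1 / 162) * sqrt_seven_mul_self

lemma inv_one_sub_upperRoot : (1 - upperRoot)⁻¹ = (14 + √7) / 7 := by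
  rw [inv_eq_iff_eq_inv, eq_comm, inv_eq_of_mul_eq_one_left]
  unfold upperRoot
  linear_combination -(1 / 189) * sqrt_seven_mul_self

lemma inv_one_sub_lowerRoot : (1 - lowerRoot)⁻¹ = (14 - √7) / 7 := by
  rw [inv_eq_iff_eq_inv, eq_comm, inv_eq_of_mul_eq_one_left]
  unfold lowerRoot
  linear_combination -(1 / 189) * sqrt_seven_mul_self

lemma mem_conjugatePairs_seven {x y : ℝ} :
    (x, y) ∈ conjugatePairs 7 ↔ ∃ a b : ℤ, a + b * √7 = x ∧ a - b * √7 = y := by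
  simp [mem_conjugatePairs]

lemma root_pow_mem_conjugatePairs (m : ℕ) :
    (((3 : ℤ) ^ (3 * m) : ℤ) : ℝ × ℝ) * (upperRoot ^ m, lowerRoot ^ m) ∈ conjugatePairs 7 := by
  have h : (27 * upperRoot, 27 * lowerRoot) ∈ conjugatePairs 7 :=
    mem_conjugatePairs_seven.mpr ⟨13, 1, by unfold upperRoot; push_cast; ring,
      by unfold lowerRoot; push_cast; ring⟩
  convert pow_mem h m using 1
  ext <;> norm_num [mul_pow, pow_mul]

lemma inv_root_pow_mem_conjugatePairs (s : ℕ) :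
    (((3 : ℤ) ^ s * 2 ^ ((s + 1) / 2) : ℤ) : ℝ × ℝ) * (upperRoot⁻¹ ^ s, lowerRoot⁻¹ ^ s) ∈
      conjugatePairs 7 := by
  have h1 : 2 * (3 * upperRoot⁻¹, 3 * lowerRoot⁻¹) ∈ conjugatePairs 7 :=
    mem_conjugatePairs_seven.mpr ⟨13, -1, by simp only [Prod.fst_ofNat, inv_upperRoot]; ring,
      by simp only [Prod.snd_ofNat, inv_lowerRoot]; ring⟩
  have h2 : 2 * (3 * upperRoot⁻¹, 3 * lowerRoot⁻¹) ^ 2 ∈ conjugatePairs 7 := by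
    refine mem_conjugatePairs_seven.mpr ⟨88, -13, ?_, ?_⟩
    · simp only [Prod.fst_ofNat, Prod.pow_mk, inv_upperRoot]
      linear_combination -(1 / 2) * sqrt_seven_mul_self
    · simp only [Prod.snd_ofNat, Prod.pow_mk, inv_lowerRoot]
      linear_combination -(1 / 2) * sqrt_seven_mul_self
  have h := pow_mul_pow_mem (N := (conjugatePairs 7).toSubmonoid) h1 h2 s
  rw [Subring.mem_toSubmonoid] at h
  convert h using 1
  ext <;> simp [mul_pow] <;> ring

lemma inv_one_sub_root_pow_mem_conjugatePairs (s : ℕ) :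
    (((7 : ℤ) ^ ((s + 1) / 2) : ℤ) : ℝ × ℝ) *
      ((1 - upperRoot)⁻¹ ^ s, (1 - lowerRoot)⁻¹ ^ s) ∈ conjugatePairs 7 := by
  have h1 : 7 * ((1 - upperRoot)⁻¹, (1 - lowerRoot)⁻¹) ∈ conjugatePairs 7 :=
    mem_conjugatePairs_seven.mpr ⟨14, 1, by simp only [Prod.fst_ofNat, inv_one_sub_upperRoot]; ring,
      by simp only [Prod.snd_ofNat, inv_one_sub_lowerRoot]; ring⟩
  have h2 : 7 * ((1 - upperRoot)⁻¹, (1 - lowerRoot)⁻¹) ^ 2 ∈ conjugatePairs 7 := by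
    refine mem_conjugatePairs_seven.mpr ⟨29, 4, ?_, ?_⟩
    · simp only [Prod.fst_ofNat, Prod.pow_mk, inv_one_sub_upperRoot]
      linear_combination -(1 / 7) * sqrt_seven_mul_self
    · simp only [Prod.snd_ofNat, Prod.pow_mk, inv_one_sub_lowerRoot]
      linear_combination -(1 / 7) * sqrt_seven_mul_self
  have h := pow_mul_pow_mem (N := (conjugatePairs 7).toSubmonoid) h1 h2 s
  rw [Subring.mem_toSubmonoid] at h
  convert h using 1
  ext <;> simp

variable {n : ℕ}

lemma isCoprime_natCast_pow_of_lt {p q : ℕ} (hp : p.Prime) (hq : q ≠ 0) (hqp : q < p) (k : ℕ) :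
    IsCoprime (p : ℤ) ((q : ℤ) ^ k) :=
  (Nat.isCoprime_iff_coprime.mpr (Nat.coprime_of_lt_prime hq hqp hp)).pow_right

lemma mul_dvd_denominator_mul (hn : 0 < n) {d : ℕ} (hd : 1 ≤ d) (hdn : d ≤ 18 * n) {M z : ℤ}
    (hMz : M ∣ 3 ^ (6 * n) * z) (hM : ∀ p : ℕ, p.Prime → 7 < p → IsCoprime (p : ℤ) M)
    (hz : ∀ p : ℕ, p.Prime → 7 * n < p → p ≤ 8 * n → p ∣ d → (p : ℤ) ∣ z) :
    (d : ℤ) * M ∣ denominator n * z := by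
  have hdvd := mul_dvd_primeFreeLcm_mul (a := 7 * n) (b := 8 * n) (by omega) (by nlinarith) hd hdn
    hMz (fun p hp hprime ↦ hM p hprime (by rw [Finset.mem_Ioc] at hp; omega))
    fun p hp hprime hpd ↦
      (hz p hprime (Finset.mem_Ioc.mp hp).1 (Finset.mem_Ioc.mp hp).2 hpd).mul_left _
  rw [denominator]
  push_cast
  rwa [mul_assoc]

lemma denominator_mul_coeff_polyPart_mem_range (hn : 0 < n) {k : ℕ} (hk : k + 1 < 18 * n) :
    (denominator n : ℝ) * (√7 * (((polyPart (numerator n) (14 * n)).coeff k : ℝ) / (k + 1 : ℕ) *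
      (upperRoot ^ (k + 1) - lowerRoot ^ (k + 1)))) ∈ (Int.castRingHom ℝ).range := by
  have hdvd := mul_dvd_denominator_mul hn (Nat.le_add_left 1 k) hk.le
    (three_pow_dvd_coeff_polyPart n k)
    (fun p hp h7 ↦ isCoprime_natCast_pow_of_lt hp three_ne_zero (by omega) _)
    fun p hp h7 h8 hpk ↦ have := Fact.mk hp; prime_dvd_coeff_polyPart h7 h8 hpk
  simpa using mul_sqrt_mul_div_mul_sub_mem_range k.succ_ne_zero hdvd
    (root_pow_mem_conjugatePairs (k + 1))

lemma denominator_mul_poleCoeff_mem_range (hn : 0 < n) {s : ℕ} (hs0 : 1 ≤ s) (hs : s ≤ 14 * n) :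
    (denominator n : ℝ) * (√7 * (((poleCoeff (numerator n) (14 * n) s : ℤ) : ℝ) / s *
      (upperRoot⁻¹ ^ s - lowerRoot⁻¹ ^ s))) ∈ (Int.castRingHom ℝ).range := by
  have hM : (3 : ℤ) ^ s * 2 ^ ((s + 1) / 2) ∣
      3 ^ (6 * n) * poleCoeff (numerator n) (14 * n) s := by
    refine IsCoprime.mul_dvd (IsCoprime.pow (by norm_num)) (three_pow_dvd_poleCoeff n s) ?_
    exact ((pow_dvd_pow_of_dvd (by norm_num) _).trans (fourteen_pow_dvd_poleCoeff n s)).mul_left _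
  have hdvd := mul_dvd_denominator_mul hn hs0 (by omega) hM
    (fun p hp h7 ↦ IsCoprime.mul_right
      (isCoprime_natCast_pow_of_lt hp three_ne_zero (by omega) _)
      (isCoprime_natCast_pow_of_lt hp two_ne_zero (by omega) _))
    fun p hp h7 h8 hps ↦ have := Fact.mk hp; prime_dvd_poleCoeff h7 h8 hs0 hs hps
  simpa using mul_sqrt_mul_div_mul_sub_mem_range (by omega) hdvd
    (inv_root_pow_mem_conjugatePairs s)

lemma denominator_mul_poleCoeff_mem_range' (hn : 0 < n) {s : ℕ} (hs0 : 1 ≤ s) (hs : s ≤ 14 * n) :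
    (denominator n : ℝ) * (√7 * (((poleCoeff (numerator n) (14 * n) s : ℤ) : ℝ) / s *
      ((1 - upperRoot)⁻¹ ^ s - (1 - lowerRoot)⁻¹ ^ s))) ∈ (Int.castRingHom ℝ).range := by
  have hM : (7 : ℤ) ^ ((s + 1) / 2) ∣ 3 ^ (6 * n) * poleCoeff (numerator n) (14 * n) s :=
    ((pow_dvd_pow_of_dvd (by norm_num) _).trans (fourteen_pow_dvd_poleCoeff n s)).mul_left _
  have hdvd := mul_dvd_denominator_mul hn hs0 (by omega) hM
    (fun p hp h7 ↦ isCoprime_natCast_pow_of_lt hp (by norm_num) h7 _)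
    fun p hp h7 h8 hps ↦ have := Fact.mk hp; prime_dvd_poleCoeff h7 h8 hs0 hs hps
  simpa using mul_sqrt_mul_div_mul_sub_mem_range (by omega) hdvd
    (inv_one_sub_root_pow_mem_conjugatePairs s)

lemma sqrt_seven_mul_log_sub_log :
    √7 * (Real.log upperRoot - Real.log (1 - upperRoot) -
      (Real.log lowerRoot - Real.log (1 - lowerRoot))) =
      -(√7 * Real.log ((√7 - 1) / (√7 + 1))) := by
  have h0 := lt_lowerRoot
  have h1 := lowerRoot_lt_upperRoot
  have h2 := upperRoot_lt
  have hsqrt : √7 - 1 ≠ 0 := by linarith [lt_sqrt_seven]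
  have hu : upperRoot ≠ 0 := by linarith
  have hl : lowerRoot ≠ 0 := by linarith
  have hu' : 1 - upperRoot ≠ 0 := by linarith
  have hl' : 1 - lowerRoot ≠ 0 := by linarith
  rw [← mul_neg, ← Real.log_inv, inv_div, ← Real.log_div hu hu', ← Real.log_div hl hl',
    ← Real.log_div (div_ne_zero hu hu') (div_ne_zero hl hl')]
  congr 2
  rw [div_div_div_eq, div_eq_div_iff (mul_ne_zero hu' hl) hsqrt]
  unfold upperRoot lowerRoot
  linear_combination (52 / 729) * sqrt_seven_mul_self

theorem exists_linearForm (hn : 0 < n) :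
    ∃ A : ℤ, (denominator n : ℝ) * (√7 * rootIntegral n) =
      A - denominator n * (poleCoeff (numerator n) (14 * n) 0 : ℤ) *
        (√7 * Real.log ((√7 - 1) / (√7 + 1))) := by
  have h0 := lt_lowerRoot
  have h2 := upperRoot_lt
  suffices h : (denominator n : ℝ) * (√7 * rootIntegral n) +
      denominator n * (poleCoeff (numerator n) (14 * n) 0 : ℤ) *
        (√7 * Real.log ((√7 - 1) / (√7 + 1))) ∈ (Int.castRingHom ℝ).range by
    obtain ⟨A, hA⟩ := h
    exact ⟨A, eq_sub_of_add_eq hA.symm⟩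
  have hpoly : ∀ k ∈ Finset.range ((polyPart (numerator n) (14 * n)).natDegree + 1), _ :=
    fun k hk ↦ denominator_mul_coeff_polyPart_mem_range hn (k := k) (by
      have := natDegree_polyPart_numerator_le n
      rw [Finset.mem_range] at hk
      omega)
  have hpole : ∀ j ∈ Finset.range (14 * n), _ := fun j hj ↦
    have hj := Finset.mem_range.mp hj
    sub_mem (denominator_mul_poleCoeff_mem_range' hn (Nat.le_add_left 1 j) hj)
      (denominator_mul_poleCoeff_mem_range hn (Nat.le_add_left 1 j) hj)
  convert add_mem (sum_mem hpoly) (sum_mem hpole) using 1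
  rw [rootIntegral, integral_aeval_div _ _ (by linarith) lowerRoot_lt_upperRoot.le (by linarith)]
  simp only [partialFractionPrimitive, mul_sub, Finset.sum_sub_distrib, ← Finset.mul_sum]
  linear_combination (denominator n : ℝ) * (poleCoeff (numerator n) (14 * n) 0 : ℤ) *
    sqrt_seven_mul_log_sub_log

end LinearForm

section ExpBound

variable {x : ℝ}

lemma pow_mul_le_exp_natCast_add (hx : 0 ≤ x) (k : ℕ) :
    2.7182818283 ^ k * (1 + x + x ^ 2 / 2) ≤ Real.exp (k + x) := by
  rw [Real.exp_add, ← mul_one (k : ℝ), Real.exp_nat_mul]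
  gcongr
  · exact Real.exp_one_gt_d9.le
  · exact Real.quadratic_le_exp_of_nonneg hx

lemma exp_natCast_add_le_pow_mul (hx0 : 0 ≤ x) (hx1 : x < 1) (k : ℕ) :
    Real.exp (k + x) ≤ 2.7182818286 ^ k * (1 / (1 - x)) := by
  rw [Real.exp_add, ← mul_one (k : ℝ), Real.exp_nat_mul]
  gcongr
  · exact Real.exp_one_lt_d9.le
  · exact Real.exp_bound_div_one_sub_of_interval hx0 hx1

end ExpBound

section PoleCoeffBound

open Polynomial

section

variable {R : Type*} [CommRing R] [LinearOrder R] [IsStrictOrderedRing R]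

/-- The polynomials whose coefficients are nonnegative in even degrees and nonpositive in odd
degrees. -/
def alternatingPolynomials (R : Type*) [CommRing R] [LinearOrder R] [IsStrictOrderedRing R] :
    Submonoid R[X] where
  carrier := {f | ∀ i, 0 ≤ (-1) ^ i * f.coeff i}
  one_mem' i := by
    obtain _ | i := i <;> simp [coeff_one]
  mul_mem' {f g} hf hg i := by
    rw [coeff_mul, Finset.mul_sum]
    refine Finset.sum_nonneg fun x hx ↦ ?_
    rw [← Finset.HasAntidiagonal.mem_antidiagonal.mp hx, pow_add, mul_mul_mul_comm]
    exact mul_nonneg (hf _) (hg _)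

lemma abs_coeff_of_mem_alternatingPolynomials {f : R[X]} (hf : f ∈ alternatingPolynomials R)
    (i : ℕ) : |f.coeff i| = (-1) ^ i * f.coeff i := by
  rw [← abs_of_nonneg (hf i), abs_mul, abs_neg_one_pow, one_mul]

end

lemma abs_poleCoeff_le_sum (f : ℤ[X]) (K j : ℕ) :
    |((poleCoeff f K j : ℤ) : ℝ)| ≤
      4 ^ K * ∑ i ∈ Finset.range (K + 1), |(f.coeff i : ℝ)| / 4 ^ i := by
  rw [← Finset.sum_range_reflect, Finset.mul_sum, poleCoeff, Int.cast_sum]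
  refine (Finset.abs_sum_le_sum_abs _ _).trans <| (Finset.sum_le_sum fun e he ↦ ?_).trans <|
    Finset.sum_le_sum_of_subset_of_nonneg (t := Finset.range (K + 1))
      (fun e he ↦ Finset.mem_range_succ_iff.mpr (Finset.mem_Icc.mp he).2) fun _ _ _ ↦ by positivity
  have hchoose : ((2 * e - j).choose e : ℝ) ≤ 4 ^ e := by
    have h : (2 * e - j).choose e ≤ 4 ^ e := by
      rw [show 4 = 2 ^ 2 by rfl, ← pow_mul]
      exact (Nat.choose_le_two_pow _ _).trans (Nat.pow_le_pow_right two_pos (Nat.sub_le _ _))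
    exact_mod_cast h
  have hpow : (4 : ℝ) ^ K = 4 ^ e * 4 ^ (K - e) := by
    rw [← pow_add, Nat.add_sub_cancel' (Finset.mem_Icc.mp he).2]
  rw [Nat.add_sub_cancel, hpow, mul_assoc, mul_div_cancel₀ _ (by positivity), mul_comm]
  push_cast
  rw [abs_mul, Nat.abs_cast]
  gcongr

theorem abs_poleCoeff_le {f : ℤ[X]} (hf : f ∈ alternatingPolynomials ℤ) (K j : ℕ) :
    |((poleCoeff f K j : ℤ) : ℝ)| ≤ 4 ^ K * aeval (-1 / 4 : ℝ) f := by
  refine (abs_poleCoeff_le_sum f K j).trans ?_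
  rw [aeval_eq_sum_range' (n := f.natDegree + 1 + (K + 1)) (by omega)]
  gcongr 4 ^ K * ?_
  calc ∑ i ∈ Finset.range (K + 1), |(f.coeff i : ℝ)| / 4 ^ i
      ≤ ∑ i ∈ Finset.range (f.natDegree + 1 + (K + 1)), |(f.coeff i : ℝ)| / 4 ^ i :=
        Finset.sum_le_sum_of_subset_of_nonneg
          (Finset.range_subset_range.mpr (Nat.le_add_left _ _)) fun _ _ _ ↦ by positivity
    _ = _ := Finset.sum_congr rfl fun i _ ↦ by
        rw [← Int.cast_abs, abs_coeff_of_mem_alternatingPolynomials hf, zsmul_eq_mul, div_pow]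
        push_cast
        ring

lemma numerator_mem_alternatingPolynomials (n : ℕ) :
    numerator n ∈ alternatingPolynomials ℤ := by
  refine mul_mem (pow_mem (fun i ↦ ?_) _) (pow_mem (fun i ↦ ?_) _)
  · rw [coeff_quadFactor]
    obtain _ | _ | _ | i := i <;> simp
  · rw [coeff_one_sub_four_mul_X]
    obtain _ | _ | i := i <;> simp

theorem abs_poleCoeff_numerator_le (n j : ℕ) :
    |((poleCoeff (numerator n) (14 * n) j : ℤ) : ℝ)| ≤ Real.exp (65.61 * n) := by
  refine (abs_poleCoeff_le (numerator_mem_alternatingPolynomials n) _ _).trans ?_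
  rw [aeval_numerator, mul_comm (65.61 : ℝ), Real.exp_nat_mul]
  simp only [pow_mul, ← mul_pow]
  refine pow_le_pow_left₀ (by norm_num) ?_ n
  have h := pow_mul_le_exp_natCast_add (x := 0.61) (by norm_num) 65
  norm_num at h ⊢
  linarith

end PoleCoeffBound

section GrowthFactor

/-- The integrand of `rootIntegral n` is `growthFactor t ^ n / t`, where `t = y (1 - y)`. -/
noncomputable def growthFactor (t : ℝ) : ℝ :=
  (42 - 350 * t + 729 * t ^ 2) ^ 8 * (1 - 4 * t) ^ 7 / t ^ 14

lemma aeval_numerator_div (n : ℕ) (t : ℝ) :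
    Polynomial.aeval t (numerator n) / t ^ (14 * n + 1) = growthFactor t ^ n * t⁻¹ := by
  rw [aeval_numerator, growthFactor, div_pow, mul_pow _ _ n, ← pow_mul, ← pow_mul, ← pow_mul,
    pow_succ _ (14 * n), ← div_div, ← div_eq_mul_inv]

-- In the variable `w = 42 (1 - 4 t) / t` the quadratic factor has the zeros `7 ± √7`.
lemma growthFactor_eq {t : ℝ} (ht : t ≠ 0) {w : ℝ} (hw : w / 42 = (1 - 4 * t) / t) :
    growthFactor t =
      ((7 - √7 - w) * (7 + √7 - w) / 42) ^ 8 * (w / 42) ^ 7 * (4 + w / 42)⁻¹ ^ 9 := by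
  have hquad : (7 - √7 - w) * (7 + √7 - w) / 42 = (42 - 350 * t + 729 * t ^ 2) / t ^ 2 := by
    obtain rfl : w = 42 * ((1 - 4 * t) / t) := by linarith
    field_simp
    linear_combination (-t ^ 2) * sqrt_seven_mul_self
  have hinv : (4 + w / 42)⁻¹ = t := by
    rw [hw]
    field_simp
    ring
  rw [hquad, hinv, hw, growthFactor]
  field_simp

lemma pow_le_mul_exp {s x : ℝ} (hs : 0 < s) (hx : 0 ≤ x) (k : ℕ) :
    x ^ k ≤ s⁻¹ ^ k * Real.exp (k * (s * x - 1)) := by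
  rw [Real.exp_nat_mul, ← mul_pow]
  refine pow_le_pow_left₀ hx ?_ k
  rw [inv_mul_eq_div, le_div_iff₀ hs]
  linarith [Real.add_one_le_exp (s * x - 1)]

lemma inv_four_add_le {u : ℝ} (hu0 : 0 ≤ u) (hu1 : u ≤ 0.23) :
    (4 + u)⁻¹ ≤ 4⁻¹ * Real.exp (-(0.235 * u)) := by
  have h := Real.exp_bound_div_one_sub_of_interval (x := 0.235 * u) (by linarith) (by linarith)
  rw [Real.exp_neg, ← mul_inv]
  refine inv_anti₀ (by positivity) ((mul_le_mul_of_nonneg_left h zero_le_four).trans ?_)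
  rw [mul_one_div, div_le_iff₀ (by linarith)]
  nlinarith

-- Every factor is replaced by its tangent exponential; the slopes `s₁`, `s₂`, `s₃` are later chosen
-- so that the exponent no longer depends on `w`.
lemma weight_le_mul_exp {s₁ s₂ s₃ x y w : ℝ} (hs₁ : 0 < s₁) (hs₂ : 0 < s₂) (hs₃ : 0 < s₃)
    (hx : 0 ≤ x) (hy : 0 ≤ y) (hw0 : 0 ≤ w) (hw1 : w ≤ 9.65) :
    (x * y / 42) ^ 8 * (w / 42) ^ 7 * (4 + w / 42)⁻¹ ^ 9 ≤
      s₁⁻¹ ^ 8 * s₂⁻¹ ^ 8 * s₃⁻¹ ^ 7 / (42 ^ 15 * 4 ^ 9) *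
        Real.exp (8 * (s₁ * x - 1) + 8 * (s₂ * y - 1) + 7 * (s₃ * w - 1) +
          9 * -(0.235 * (w / 42))) := by
  have hinv := pow_le_pow_left₀ (by positivity)
    (inv_four_add_le (u := w / 42) (by linarith) (by linarith)) 9
  rw [mul_pow, ← Real.exp_nat_mul] at hinv
  calc (x * y / 42) ^ 8 * (w / 42) ^ 7 * (4 + w / 42)⁻¹ ^ 9
      = x ^ 8 * y ^ 8 * w ^ 7 * (4 + w / 42)⁻¹ ^ 9 / 42 ^ 15 := by ring
    _ ≤ s₁⁻¹ ^ 8 * Real.exp ((8 : ℕ) * (s₁ * x - 1)) *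
        (s₂⁻¹ ^ 8 * Real.exp ((8 : ℕ) * (s₂ * y - 1))) *
        (s₃⁻¹ ^ 7 * Real.exp ((7 : ℕ) * (s₃ * w - 1))) *
        (4⁻¹ ^ 9 * Real.exp ((9 : ℕ) * -(0.235 * (w / 42)))) / 42 ^ 15 := by
      gcongr
      · exact pow_le_mul_exp hs₁ hx 8
      · exact pow_le_mul_exp hs₂ hy 8
      · exact pow_le_mul_exp hs₃ hw0 7
    _ = _ := by
      push_cast
      rw [Real.exp_add, Real.exp_add, Real.exp_add]
      ring

lemma weight_le_of_le_smaller_zero {w : ℝ} (hw0 : 0 ≤ w) (hw1 : w ≤ 7 - √7) :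
    ((7 - √7 - w) * (7 + √7 - w) / 42) ^ 8 * (w / 42) ^ 7 * (4 + w / 42)⁻¹ ^ 9 ≤
      Real.exp (-39.5) := by
  have h1 := lt_sqrt_seven
  have h2 := sqrt_seven_lt
  refine (weight_le_mul_exp (s₁ := 379 / 1000) (s₂ := 14079 / 112000) (s₃ := 73 / 125)
    (by norm_num) (by norm_num) (by norm_num) (by linarith) (by linarith) hw0
    (by linarith)).trans ?_
  refine (mul_le_of_le_one_right (by positivity) (Real.exp_le_one_iff.mpr (by linarith))).trans ?_
  have hexp := exp_natCast_add_le_pow_mul (x := 0.5) (by norm_num) (by norm_num) 39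
  rw [Real.exp_neg, le_inv_comm₀ (by positivity) (Real.exp_pos _)]
  norm_num at hexp ⊢
  linarith

lemma weight_le_of_smaller_zero_le {w : ℝ} (hw0 : 7 - √7 ≤ w) (hw1 : w ≤ 7 + √7) :
    ((7 - √7 - w) * (7 + √7 - w) / 42) ^ 8 * (w / 42) ^ 7 * (4 + w / 42)⁻¹ ^ 9 ≤
      Real.exp (-39.5) := by
  have h1 := lt_sqrt_seven
  have h2 := sqrt_seven_lt
  have hweight := weight_le_mul_exp (s₁ := 33 / 100) (s₂ := 9897 / 22400) (s₃ := 27 / 200)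
    (x := w - (7 - √7)) (y := 7 + √7 - w) (w := w) (by norm_num) (by norm_num) (by norm_num)
    (by linarith) (by linarith) (by linarith) (by linarith)
  rw [← Even.neg_pow (by decide), ← neg_div, ← neg_mul, neg_sub]
  refine hweight.trans <| (mul_le_mul_of_nonneg_left
    ((Real.exp_le_exp (y := -0.4)).mpr (by linarith)) (by positivity)).trans ?_
  rw [show (-39.5 : ℝ) = -39.1 + -0.4 by norm_num, Real.exp_add]
  gcongr ?_ * _
  have hexp := exp_natCast_add_le_pow_mul (x := 0.1) (by norm_num) (by norm_num) 39
  rw [Real.exp_neg, le_inv_comm₀ (by positivity) (Real.exp_pos _)]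
  norm_num at hexp ⊢
  linarith

variable {t : ℝ}

lemma growthFactor_nonneg (ht : t ≤ 1 / 4) : 0 ≤ growthFactor t :=
  div_nonneg (mul_nonneg (Even.pow_nonneg (by decide) _) (pow_nonneg (by linarith) _))
    (Even.pow_nonneg (by decide) _)

theorem growthFactor_le (ht0 : 42 / (175 + √7) ≤ t) (ht1 : t ≤ 1 / 4) :
    growthFactor t ≤ Real.exp (-39.5) := by
  have hsqrt := lt_sqrt_seven
  have ht : 0 < t := ht0.trans_lt' (by positivity)
  rw [div_le_iff₀ (by positivity)] at ht0
  rw [growthFactor_eq ht.ne' (mul_div_cancel_left₀ ((1 - 4 * t) / t) (by norm_num : (42 : ℝ) ≠ 0))]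
  have hw0 : 0 ≤ 42 * ((1 - 4 * t) / t) :=
    mul_nonneg (by norm_num) (div_nonneg (by linarith) ht.le)
  have hw1 : 42 * ((1 - 4 * t) / t) ≤ 7 + √7 := by
    rw [← mul_div_assoc, div_le_iff₀ ht]
    linarith
  exact (le_total _ _).elim (weight_le_of_le_smaller_zero hw0)
    fun h ↦ weight_le_of_smaller_zero_le h hw1

theorem le_growthFactor (ht0 : 0.239391 ≤ t) (ht1 : t ≤ 0.239596) :
    Real.exp (-39.8) ≤ growthFactor t := by
  have hquad : 0.00927 ≤ -(42 - 350 * t + 729 * t ^ 2) := by nlinarith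
  have hlin : 0.041616 ≤ 1 - 4 * t := by linarith
  have hexp := pow_mul_le_exp_natCast_add (x := 0.8) (by norm_num) 39
  calc Real.exp (-39.8) ≤ 0.00927 ^ 8 * 0.041616 ^ 7 / 0.2396 ^ 14 := by
        rw [Real.exp_neg, inv_le_comm₀ (Real.exp_pos _) (by positivity)]
        norm_num at hexp ⊢
        linarith
    _ ≤ (-(42 - 350 * t + 729 * t ^ 2)) ^ 8 * (1 - 4 * t) ^ 7 / t ^ 14 := by
        have : 0 < t := by linarith
        gcongr
        linarith
    _ = growthFactor t := by rw [Even.neg_pow (by decide), growthFactor]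

end GrowthFactor

section IntegralBounds

lemma mul_one_sub_le_one_div_four (y : ℝ) : y * (1 - y) ≤ 1 / 4 := by
  linarith [four_mul_le_sq_add y (1 - y)]

variable {y : ℝ}

lemma lowerRoot_mul_one_sub : lowerRoot * (1 - lowerRoot) = 42 / (175 + √7) := by
  rw [eq_div_iff (by positivity), lowerRoot]
  linear_combination -((176 + √7) / 729) * sqrt_seven_mul_self

lemma le_mul_one_sub (hy : y ∈ Set.Icc lowerRoot upperRoot) : 42 / (175 + √7) ≤ y * (1 - y) := by
  have hadd : y + lowerRoot ≤ 26 / 27 := by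
    have h := hy.2
    unfold lowerRoot
    unfold upperRoot at h
    linarith
  rw [← lowerRoot_mul_one_sub]
  nlinarith [hy.1]

lemma intervalIntegrable_growthFactor_pow_mul_inv (n : ℕ) :
    IntervalIntegrable (fun y ↦ growthFactor (y * (1 - y)) ^ n * (y * (1 - y))⁻¹)
      MeasureTheory.volume lowerRoot upperRoot := by
  simp only [← aeval_numerator_div]
  refine ((continuousOn_aeval_div (numerator n) (14 * n)).mono ?_).intervalIntegrable
  rw [Set.uIcc_of_le lowerRoot_lt_upperRoot.le]
  exact Set.Icc_subset_Ioo (by linarith [lt_lowerRoot]) (by linarith [upperRoot_lt])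

theorem rootIntegral_le (n : ℕ) : rootIntegral n ≤ Real.exp (-39.5 * n) := by
  have hlow := lt_lowerRoot
  have hup := upperRoot_lt
  have hbound : ∀ y ∈ Set.Icc lowerRoot upperRoot,
      growthFactor (y * (1 - y)) ^ n * (y * (1 - y))⁻¹ ≤ Real.exp (-39.5 * n) * 5 := by
    intro y hy
    have ht : 5⁻¹ ≤ y * (1 - y) := by nlinarith [hy.1, hy.2]
    rw [mul_comm (-39.5 : ℝ), Real.exp_nat_mul]
    gcongr
    · exact growthFactor_nonneg (mul_one_sub_le_one_div_four y)
    · exact growthFactor_le (le_mul_one_sub hy) (mul_one_sub_le_one_div_four y)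
    · exact inv_le_of_inv_le₀ (by norm_num) ht
  have hle := intervalIntegral.integral_mono_on lowerRoot_lt_upperRoot.le
    (intervalIntegrable_growthFactor_pow_mul_inv n) intervalIntegrable_const hbound
  rw [intervalIntegral.integral_const, smul_eq_mul] at hle
  simp only [rootIntegral, aeval_numerator_div]
  nlinarith [Real.exp_pos (-39.5 * n)]

theorem le_rootIntegral (n : ℕ) : 0.004 * Real.exp (-39.8 * n) ≤ rootIntegral n := by
  have hlow : lowerRoot ≤ 0.397 := by unfold lowerRoot; linarith [lt_sqrt_seven]
  have hup : 0.398 ≤ upperRoot := by unfold upperRoot; linarith [lt_sqrt_seven]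
  have hpos : ∀ y ∈ Set.Ioc lowerRoot upperRoot, 0 < y * (1 - y) := fun y hy ↦
    mul_pos (by linarith [lt_lowerRoot, hy.1]) (by linarith [upperRoot_lt, hy.2])
  have hnonneg : ∀ y ∈ Set.Ioc lowerRoot upperRoot,
      0 ≤ growthFactor (y * (1 - y)) ^ n * (y * (1 - y))⁻¹ := fun y hy ↦
    mul_nonneg (pow_nonneg (growthFactor_nonneg (mul_one_sub_le_one_div_four y)) n)
      (inv_pos.mpr (hpos y hy)).le
  have hbound : ∀ y ∈ Set.Icc (0.397 : ℝ) 0.398,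
      Real.exp (-39.8 * n) * 4 ≤ growthFactor (y * (1 - y)) ^ n * (y * (1 - y))⁻¹ := by
    intro y hy
    have ht0 : 0.239391 ≤ y * (1 - y) := by nlinarith [hy.1, hy.2]
    have ht1 : y * (1 - y) ≤ 0.239596 := by nlinarith [hy.1, hy.2]
    rw [mul_comm (-39.8 : ℝ), Real.exp_nat_mul]
    exact mul_le_mul (pow_le_pow_left₀ (Real.exp_pos _).le (le_growthFactor ht0 ht1) n)
      ((le_inv_comm₀ (by norm_num) (by linarith)).mpr (by linarith)) (by norm_num)
      (pow_nonneg (growthFactor_nonneg (mul_one_sub_le_one_div_four y)) n)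
  have hint := intervalIntegrable_growthFactor_pow_mul_inv n
  have hsub := intervalIntegral.integral_mono_interval hlow (by norm_num) hup
    (MeasureTheory.ae_restrict_of_forall_mem measurableSet_Ioc hnonneg) hint
  have hle := intervalIntegral.integral_mono_on (by norm_num) intervalIntegrable_const
    (hint.mono_set (Set.uIcc_subset_uIcc (Set.mem_uIcc_of_le hlow (by linarith))
      (Set.mem_uIcc_of_le (by linarith) hup))) hbound
  rw [intervalIntegral.integral_const, smul_eq_mul] at hle
  simp only [rootIntegral, aeval_numerator_div]
  linarith

end IntegralBounds

section DenominatorSize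

open Filter Topology Chebyshev

lemma sum_log_primes_Ioc {a b : ℕ} (hab : a ≤ b) :
    ∑ p ∈ Finset.Ioc a b with p.Prime, Real.log p = theta b - theta a := by
  rw [theta, theta, Nat.floor_natCast, Nat.floor_natCast,
    ← Finset.Ioc_union_Ioc_eq_Ioc (Nat.zero_le a) hab, Finset.filter_union, Finset.sum_union,
    add_sub_cancel_left]
  exact Finset.disjoint_filter_filter (Finset.Ioc_disjoint_Ioc_of_le le_rfl)

lemma primeFreeLcm_pos {N b : ℕ} (a : ℕ) (hb : b ≤ N) : 0 < primeFreeLcm N a b :=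
  Nat.pos_of_mul_pos_right ((primeFreeLcm_mul_prod hb).symm ▸ Nat.lcmUpto_pos N)

theorem log_primeFreeLcm {N a b : ℕ} (hab : a ≤ b) (hb : b ≤ N) :
    Real.log (primeFreeLcm N a b) = psi N - (theta b - theta a) := by
  have hp0 : ∀ p ∈ (Finset.Ioc a b).filter Nat.Prime, (p : ℝ) ≠ 0 := fun p hp ↦
    Nat.cast_ne_zero.mpr (Finset.mem_filter.mp hp).2.ne_zero
  rw [psi_eq_log_lcmUpto, ← primeFreeLcm_mul_prod hb (a := a), Nat.cast_mul, Nat.cast_prod,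
    Real.log_mul (Nat.cast_ne_zero.mpr (primeFreeLcm_pos a hb).ne')
      (Finset.prod_ne_zero_iff.mpr hp0), Real.log_prod hp0, sum_log_primes_Ioc hab,
    add_sub_cancel_right]

lemma denominator_pos (n : ℕ) : 0 < denominator n :=
  mul_pos (primeFreeLcm_pos _ (by omega)) (by positivity)

lemma tendsto_comp_natCast_mul_div {f : ℝ → ℝ} {l : ℝ}
    (hf : Tendsto (fun x ↦ f x / x) atTop (𝓝 l)) {c : ℕ} (hc : 0 < c) :
    Tendsto (fun n : ℕ ↦ f (c * n : ℕ) / n) atTop (𝓝 (c * l)) := by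
  refine ((hf.comp (tendsto_natCast_atTop_atTop.comp
    (tendsto_id.const_mul_atTop' hc))).const_mul (c : ℝ)).congr fun n ↦ ?_
  have hc' : (c : ℝ) ≠ 0 := Nat.cast_ne_zero.mpr hc.ne'
  simp only [Function.comp_apply, id, Nat.cast_mul]
  rw [mul_div_assoc', mul_div_mul_left _ _ hc']

theorem tendsto_log_denominator_div :
    Tendsto (fun n : ℕ ↦ Real.log (denominator n) / n) atTop (𝓝 (17 + 6 * Real.log 3)) := by
  have hpsi := tendsto_comp_natCast_mul_div tendsto_psi_div_self (c := 18) (by norm_num)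
  have htheta7 := tendsto_comp_natCast_mul_div tendsto_theta_div_self (c := 7) (by norm_num)
  have htheta8 := tendsto_comp_natCast_mul_div tendsto_theta_div_self (c := 8) (by norm_num)
  have h := (hpsi.sub (htheta8.sub htheta7)).add_const (6 * Real.log 3)
  rw [show ((18 : ℕ) * 1 - ((8 : ℕ) * 1 - (7 : ℕ) * 1) + 6 * Real.log 3 : ℝ) =
    17 + 6 * Real.log 3 by norm_num] at h
  refine h.congr' ?_
  filter_upwards [eventually_gt_atTop 0] with n hn
  have hlcm : (primeFreeLcm (18 * n) (7 * n) (8 * n) : ℝ) ≠ 0 :=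
    Nat.cast_ne_zero.mpr (primeFreeLcm_pos _ (by omega)).ne'
  have hlog : Real.log (denominator n) =
      psi (18 * n : ℕ) - (theta (8 * n : ℕ) - theta (7 * n : ℕ)) + (6 * n : ℕ) * Real.log 3 := by
    rw [denominator, Nat.cast_mul (primeFreeLcm _ _ _), Nat.cast_pow,
      Real.log_mul hlcm (by positivity), Real.log_pow, log_primeFreeLcm (by omega) (by omega),
      Nat.cast_ofNat]
  have hn' : (n : ℝ) ≠ 0 := Nat.cast_ne_zero.mpr hn.ne'
  rw [hlog, Nat.cast_mul 6, Nat.cast_ofNat]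
  field_simp

theorem eventually_denominator_le :
    ∀ᶠ n : ℕ in atTop, (denominator n : ℝ) ≤ Real.exp (23.62 * n) := by
  have hlim : 17 + 6 * Real.log 3 < 23.62 := by linarith [Real.log_three_lt_d9]
  filter_upwards [tendsto_log_denominator_div.eventually_lt_const hlim, eventually_gt_atTop 0]
    with n hn hn0
  rw [div_lt_iff₀ (Nat.cast_pos.mpr hn0)] at hn
  exact (Real.log_le_iff_le_exp (Nat.cast_pos.mpr (denominator_pos n))).mp hn.le

end DenominatorSize

section IrrationalityCriterion

open Filter Topology

variable {α κ τ σ ρ : ℝ}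

lemma finite_setOf_abs_sub_div_lt_of_eventually (hκ : 0 ≤ κ)
    (h : ∀ᶠ q : ℕ in atTop, ∀ p : ℤ, (q : ℝ) ^ (-κ) ≤ |α - p / q|) :
    {pq : ℤ × ℕ+ | |α - (pq.1 : ℝ) / ((pq.2 : ℕ) : ℝ)| < ((pq.2 : ℕ) : ℝ) ^ (-κ)}.Finite := by
  obtain ⟨Q, hQ⟩ := eventually_atTop.mp h
  set M : ℤ := ⌈(Q : ℝ) * (|α| + 1)⌉
  refine ((Set.finite_Icc (-M) M).prod (Set.finite_Icc 1 Q.succPNat)).subset ?_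
  rintro ⟨p, q⟩ (hpq : |α - p / (q : ℕ)| < ((q : ℕ) : ℝ) ^ (-κ))
  have hq0 : (0 : ℝ) < (q : ℕ) := Nat.cast_pos.mpr q.pos
  have hqQ : (q : ℕ) < Q := by
    by_contra! hle
    exact (hQ q hle p).not_gt hpq
  have hpow : ((q : ℕ) : ℝ) ^ (-κ) ≤ 1 :=
    Real.rpow_le_one_of_one_le_of_nonpos (Nat.one_le_cast.mpr q.pos) (neg_nonpos.mpr hκ)
  have hdiv : |(p : ℝ)| / (q : ℕ) ≤ |α| + 1 := by
    have hsub := abs_sub_abs_le_abs_sub ((p : ℝ) / (q : ℕ)) α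
    rw [abs_sub_comm, abs_div, Nat.abs_cast] at hsub
    linarith
  have hp : |(p : ℝ)| ≤ M := calc
    |(p : ℝ)| ≤ (|α| + 1) * (q : ℕ) := (div_le_iff₀ hq0).mp hdiv
    _ ≤ Q * (|α| + 1) := by
      rw [mul_comm]
      gcongr
    _ ≤ M := Int.le_ceil _
  exact ⟨abs_le.mp (by exact_mod_cast hp), one_le, hqQ.le.trans Q.le_succ⟩

lemma linearForm_le_or_half_le {A B p : ℤ} {q : ℕ} (hq : 0 < q) (hpos : 0 < A - B * α)
    (hsmall : q * (A - B * α) ≤ 1 / 2) :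
    A - B * α ≤ |(B : ℝ)| * |α - p / q| ∨ 1 / 2 ≤ q * (|(B : ℝ)| * |α - p / q|) := by
  have hq' : (0 : ℝ) < q := Nat.cast_pos.mpr hq
  have hsum : (A - B * α) + B * (α - p / q) = ((q * A - B * p : ℤ) : ℝ) / q := by
    push_cast
    field_simp
    ring
  rw [← abs_mul]
  obtain hN | hN := eq_or_ne (q * A - B * p) 0
  · rw [hN, Int.cast_zero, zero_div] at hsum
    exact .inl (by rw [eq_neg_of_add_eq_zero_left hsum]; exact neg_le_abs _)
  · have hN1 : (1 : ℝ) ≤ |((q * A - B * p : ℤ) : ℝ)| := by exact_mod_cast Int.one_le_abs hN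
    rw [eq_div_iff hq'.ne'] at hsum
    rw [← hsum, abs_mul, abs_of_pos hq'] at hN1
    have htri := abs_add_le (A - B * α) (B * (α - p / q))
    rw [abs_of_pos hpos] at htri
    exact .inr (by nlinarith)

lemma tendsto_ceil_add_div_div (hτ : 0 < τ) (c : ℝ) :
    Tendsto (fun x : ℝ ↦ (⌈(x + c) / τ⌉₊ : ℝ) / x) atTop (𝓝 τ⁻¹) := by
  have hlin : Tendsto (fun x : ℝ ↦ (x + c) / τ) atTop atTop :=
    (tendsto_atTop_add_const_right _ c tendsto_id).atTop_div_const hτ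
  have hratio : Tendsto (fun x : ℝ ↦ (1 + c / x) / τ) atTop (𝓝 ((1 + 0) / τ)) :=
    ((tendsto_const_nhds.div_atTop tendsto_id).const_add 1).div_const τ
  have h := ((tendsto_nat_ceil_div_atTop (R := ℝ)).comp hlin).mul hratio
  rw [add_zero, one_mul, one_div] at h
  refine h.congr' ?_
  filter_upwards [eventually_gt_atTop 0, eventually_gt_atTop (-c)] with x hx hxc
  have hx' : x + c ≠ 0 := by linarith
  simp only [Function.comp_apply]
  field_simp

lemma exp_le_abs_sub_div {A B p : ℤ} {q n : ℕ} (hq : 0 < q) (hpos : 0 < A - B * α)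
    (hlog : Real.log q + Real.log 2 ≤ τ * n) (hle : A - B * α ≤ Real.exp (-τ * n))
    (hB : |(B : ℝ)| ≤ Real.exp (σ * n)) (hge : |(B : ℝ)| * Real.exp (-ρ * n) ≤ A - B * α) :
    Real.exp (-ρ * n) ≤ |α - p / q| ∨
      Real.exp (-(Real.log 2 + Real.log q + σ * n)) ≤ |α - p / q| := by
  have hq' : (0 : ℝ) < q := Nat.cast_pos.mpr hq
  have hhalf : (1 / 2 : ℝ) = Real.exp (-Real.log 2) := by
    rw [Real.exp_neg, Real.exp_log two_pos, one_div]
  have hsmall : q * (A - B * α) ≤ 1 / 2 := by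
    refine (mul_le_mul_of_nonneg_left hle hq'.le).trans ?_
    nth_rw 1 [hhalf, ← Real.exp_log hq', ← Real.exp_add, Real.exp_le_exp]
    linarith
  refine (linearForm_le_or_half_le (p := p) hq hpos hsmall).imp (fun h ↦ ?_) fun h ↦ ?_
  · have hB0 : 0 < |(B : ℝ)| := by
      refine abs_pos.mpr fun hB0 ↦ ?_
      simp only [hB0, abs_zero, zero_mul] at h hpos
      exact h.not_gt hpos
    exact le_of_mul_le_mul_left (hge.trans h) hB0
  · rw [Real.exp_neg, inv_le_iff_one_le_mul₀ (Real.exp_pos _), Real.exp_add, Real.exp_add,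
      Real.exp_log two_pos, Real.exp_log hq']
    have := mul_le_mul_of_nonneg_right hB (abs_nonneg (α - p / q))
    nlinarith

theorem finite_setOf_abs_sub_div_lt (hτ : 0 < τ) (hσ : 0 ≤ σ) (hκσ : 1 + σ / τ < κ)
    (hκρ : ρ / τ < κ)
    (h : ∀ᶠ n : ℕ in atTop, ∃ A B : ℤ, 0 < A - B * α ∧ A - B * α ≤ Real.exp (-τ * n) ∧
      |(B : ℝ)| ≤ Real.exp (σ * n) ∧ |(B : ℝ)| * Real.exp (-ρ * n) ≤ A - B * α) :
    {pq : ℤ × ℕ+ | |α - (pq.1 : ℝ) / ((pq.2 : ℕ) : ℝ)| < ((pq.2 : ℕ) : ℝ) ^ (-κ)}.Finite := by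
  have hκ : 0 ≤ κ := by linarith [div_nonneg hσ hτ.le]
  refine finite_setOf_abs_sub_div_lt_of_eventually hκ ?_
  have hlog : Tendsto (fun q : ℕ ↦ Real.log q) atTop atTop :=
    Real.tendsto_log_atTop.comp tendsto_natCast_atTop_atTop
  have hceil := (tendsto_ceil_add_div_div hτ (Real.log 2)).comp hlog
  have hn : Tendsto (fun q : ℕ ↦ ⌈(Real.log q + Real.log 2) / τ⌉₊) atTop atTop :=
    tendsto_nat_ceil_atTop.comp <|
      (tendsto_atTop_add_const_right _ _ hlog).atTop_div_const hτ
  have hρn := (hceil.const_mul ρ).eventually_lt_const hκρ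
  have hσn := (((hlog.const_div_atTop (Real.log 2)).add_const 1).add
    (hceil.const_mul σ)).eventually_lt_const (by rwa [zero_add, ← div_eq_mul_inv])
  filter_upwards [hn.eventually h, hρn, hσn, hlog.eventually_gt_atTop 0, eventually_gt_atTop 0]
    with q ⟨A, B, hpos, hle, hB, hge⟩ hρq hσq hlogq hq p
  simp only [Function.comp_apply] at hρq hσq
  rw [mul_div_assoc', div_lt_iff₀ hlogq] at hρq
  rw [mul_div_assoc', ← div_self hlogq.ne', ← add_div, ← add_div, div_lt_iff₀ hlogq] at hσq
  have hlogn := (div_le_iff₀' hτ).mp (Nat.le_ceil ((Real.log q + Real.log 2) / τ))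
  rw [Real.rpow_def_of_pos (Nat.cast_pos.mpr hq)]
  obtain hsub | hsub := exp_le_abs_sub_div (p := p) hq hpos hlogn hle hB hge
  all_goals
    refine hsub.trans' (Real.exp_le_exp.mpr ?_)
    linarith

end IrrationalityCriterion

section LinearFormSize

open Filter

lemma eventually_le_exp_mul (c : ℝ) {d : ℝ} (hd : 0 < d) :
    ∀ᶠ n : ℕ in atTop, c ≤ Real.exp (d * n) :=
  (Real.tendsto_exp_atTop.comp
    (tendsto_natCast_atTop_atTop.const_mul_atTop hd)).eventually_ge_atTop c

lemma rootIntegral_pos (n : ℕ) : 0 < rootIntegral n :=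
  (le_rootIntegral n).trans_lt' (by positivity)

lemma eventually_sqrt_seven_mul_rootIntegral_le :
    ∀ᶠ n : ℕ in atTop, √7 * rootIntegral n ≤ Real.exp (-39.49 * n) := by
  filter_upwards [eventually_le_exp_mul √7 (d := 0.01) (by norm_num)] with n hn
  calc √7 * rootIntegral n ≤ Real.exp (0.01 * n) * Real.exp (-39.5 * n) := by
        exact mul_le_mul hn (rootIntegral_le n) (rootIntegral_pos n).le (Real.exp_nonneg _)
    _ = Real.exp (-39.49 * n) := by rw [← Real.exp_add]; congr 1; ring

lemma eventually_le_sqrt_seven_mul_rootIntegral :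
    ∀ᶠ n : ℕ in atTop, Real.exp (-39.81 * n) ≤ √7 * rootIntegral n := by
  filter_upwards [eventually_le_exp_mul 250 (d := 0.01) (by norm_num)] with n hn
  calc Real.exp (-39.81 * n) ≤ 0.004 * Real.exp (0.01 * n) * Real.exp (-39.81 * n) :=
        le_mul_of_one_le_left (Real.exp_nonneg _) (by linarith)
    _ = 0.004 * Real.exp (-39.8 * n) := by
        rw [mul_assoc, ← Real.exp_add]
        congr 2
        ring
    _ ≤ rootIntegral n := le_rootIntegral n
    _ ≤ √7 * rootIntegral n :=
        le_mul_of_one_le_left (rootIntegral_pos n).le (by linarith [lt_sqrt_seven])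

lemma eventually_exists_linearForm_bounds :
    ∀ᶠ n : ℕ in atTop, ∃ A B : ℤ,
      0 < A - B * (√7 * Real.log ((√7 - 1) / (√7 + 1))) ∧
      A - B * (√7 * Real.log ((√7 - 1) / (√7 + 1))) ≤ Real.exp (-15.87 * n) ∧
      |(B : ℝ)| ≤ Real.exp (89.23 * n) ∧
      |(B : ℝ)| * Real.exp (-105.42 * n) ≤
        A - B * (√7 * Real.log ((√7 - 1) / (√7 + 1))) := by
  filter_upwards [eventually_denominator_le, eventually_sqrt_seven_mul_rootIntegral_le,
    eventually_le_sqrt_seven_mul_rootIntegral, eventually_gt_atTop 0] with n hden hupper hlower hn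
  obtain ⟨A, hA⟩ := exists_linearForm hn
  have hden_pos : (0 : ℝ) < denominator n := Nat.cast_pos.mpr (denominator_pos n)
  have hcoeff := abs_poleCoeff_numerator_le n 0
  refine ⟨A, denominator n * poleCoeff (numerator n) (14 * n) 0, ?_⟩
  push_cast
  rw [← hA, abs_mul, Nat.abs_cast]
  refine ⟨mul_pos hden_pos ((Real.exp_pos _).trans_le hlower), ?_, ?_, ?_⟩
  · calc (denominator n : ℝ) * (√7 * rootIntegral n)
        ≤ Real.exp (23.62 * n) * Real.exp (-39.49 * n) :=
          mul_le_mul hden hupper ((Real.exp_nonneg _).trans hlower) (Real.exp_nonneg _)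
      _ = Real.exp (-15.87 * n) := by rw [← Real.exp_add]; congr 1; ring
  · calc (denominator n : ℝ) * |((poleCoeff (numerator n) (14 * n) 0 : ℤ) : ℝ)|
        ≤ Real.exp (23.62 * n) * Real.exp (65.61 * n) := by gcongr
      _ = Real.exp (89.23 * n) := by rw [← Real.exp_add]; congr 1; ring
  · rw [mul_assoc]
    refine mul_le_mul_of_nonneg_left ?_ hden_pos.le
    calc |((poleCoeff (numerator n) (14 * n) 0 : ℤ) : ℝ)| * Real.exp (-105.42 * n)
        ≤ Real.exp (65.61 * n) * Real.exp (-105.42 * n) := by gcongr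
      _ = Real.exp (-39.81 * n) := by rw [← Real.exp_add]; congr 1; ring
      _ ≤ √7 * rootIntegral n := hlower

end LinearFormSize

theorem irrationality_measure_alpha_0 :
    ∀ κ : ℝ, κ > 6.64611 →
      {pq : ℤ × ℕ+ |
        |Real.sqrt 7 * Real.log ((Real.sqrt 7 - 1) / (Real.sqrt 7 + 1)) -
            (pq.1 : ℝ) / ((pq.2 : ℕ) : ℝ)| <
          ((pq.2 : ℕ) : ℝ) ^ (-κ)}.Finite := by
  intro κ hκ
  have hexponent : 1 + (89.23 : ℝ) / 15.87 < κ := by norm_num at hκ ⊢; linarith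
  have hexponent' : (105.42 : ℝ) / 15.87 < κ := by norm_num at hκ ⊢; linarith
  exact finite_setOf_abs_sub_div_lt (by norm_num) (by norm_num) hexponent hexponent'
    eventually_exists_linearForm_bounds
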